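/- (Lemma: accuracy of U_{(1)}.) Under the conditions of the SARRS upper bound theorem (A ∈ Θ(s,r,d,γ), λ ≥ 4σ max_j ‖X_{*j}‖(√r + √(4 log p)), Condition SE(s_*, c_*, K) with s_* ≥ 2s and 6c_* ≤ √(s_*/s − 1), σ_r(V'V_{(0)}) ≥ c_0 for an absolute constant c_0 > 0, and noise in Y_{(1)} i.i.d. N(0,4σ²)), let U ∈ O(n,r) be the left singular vector matrix of XA and let U_{(1)} ∈ O(n,r) be the matrix of top-r left singular vectors of XB_{(1)}, where B_{(1)} = argmin_{B ∈ ℝ^{p×r}} ‖Y_{(1)}V_{(0)} − XB‖_F²/2 + λ‖B‖_{2,1}. Then there exists a constant C depending only on κ_±(s_*), c_* and c_0 such that, with probability at least 1 − 1/p, ‖U_{(1)}U_{(1)}' − UU'‖_F ≤ C √s λ / d. -/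

import Mathlib

open MeasureTheory ProbabilityTheory Matrix Set
open scoped ENNReal NNReal

noncomputable section

/-- Euclidean (ℓ₂) norm of a finitely indexed real vector. -/
def l2norm {I : Type*} [Fintype I] (v : I → ℝ) : ℝ := Real.sqrt (∑ i, v i ^ 2)

/-- Frobenius norm of a real matrix. -/
def frobNorm {I J : Type*} [Fintype I] [Fintype J] (M : Matrix I J ℝ) : ℝ :=
  Real.sqrt (∑ i, ∑ j, M i j ^ 2)

/-- ℓ₂/ℓ₁ norm: the sum of the ℓ₂ norms of the rows. -/
def norm21 {I J : Type*} [Fintype I] [Fintype J] (M : Matrix I J ℝ) : ℝ :=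
  ∑ i, l2norm (M i)

open Classical in
/-- Row support: indices of nonzero rows. -/
def rowSupport {I J : Type*} [Fintype I] [Fintype J] (M : Matrix I J ℝ) : Finset I :=
  Finset.univ.filter (fun i => M i ≠ 0)

/-- The j-th largest singular value (j ≥ 1), via the Courant–Fischer max–min
characterization: `σ_j(M) = max_{dim V = j} min_{v ∈ V, ‖v‖=1} ‖Mv‖`. -/
def singularValue {I J : Type*} [Fintype I] [Fintype J] (M : Matrix I J ℝ) (j : ℕ) : ℝ :=
  sSup { t | ∃ V : Submodule ℝ (J → ℝ), Module.finrank ℝ V = j ∧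
    t = sInf { u | ∃ v ∈ V, l2norm v = 1 ∧ u = l2norm (M.mulVec v) } }

/-- Operator norm (largest singular value). -/
def opNorm {I J : Type*} [Fintype I] [Fintype J] (M : Matrix I J ℝ) : ℝ :=
  sSup { t | ∃ v : J → ℝ, l2norm v = 1 ∧ t = l2norm (M.mulVec v) }

/-- Schatten-q norm. -/
def schattenNorm {I J : Type*} [Fintype I] [Fintype J] (M : Matrix I J ℝ) (q : ℝ) : ℝ :=
  (∑ i ∈ Finset.Icc 1 (min (Fintype.card I) (Fintype.card J)), singularValue M i ^ q) ^ (1 / q)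

/-- Squared lower k-sparse Riesz constant `κ₋²(k)`:
the minimum over column subsets B with |B| = k of the smallest eigenvalue of X_B' X_B. -/
def kappaMinusSq {n p : ℕ} (X : Matrix (Fin n) (Fin p) ℝ) (k : ℕ) : ℝ :=
  sInf { t | ∃ B : Finset (Fin p), B.card = k ∧ ∃ v : Fin p → ℝ,
    (∀ i, i ∉ B → v i = 0) ∧ l2norm v = 1 ∧ t = l2norm (X.mulVec v) ^ 2 }

/-- Squared upper k-sparse Riesz constant `κ₊²(k)`. -/
def kappaPlusSq {n p : ℕ} (X : Matrix (Fin n) (Fin p) ℝ) (k : ℕ) : ℝ :=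
  sSup { t | ∃ B : Finset (Fin p), B.card = k ∧ ∃ v : Fin p → ℝ,
    (∀ i, i ∉ B → v i = 0) ∧ l2norm v = 1 ∧ t = l2norm (X.mulVec v) ^ 2 }

def kappaMinus {n p : ℕ} (X : Matrix (Fin n) (Fin p) ℝ) (k : ℕ) : ℝ :=
  Real.sqrt (kappaMinusSq X k)

def kappaPlus {n p : ℕ} (X : Matrix (Fin n) (Fin p) ℝ) (k : ℕ) : ℝ :=
  Real.sqrt (kappaPlusSq X k)

/-- Membership in the parameter space Θ(s, r, d, γ): rank r, all nonzero singular values in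
(d, γd], and at most s nonzero rows. (Singular values are automatically nonincreasing.) -/
def memTheta {p m : ℕ} (A : Matrix (Fin p) (Fin m) ℝ) (s r : ℕ) (d γ : ℝ) : Prop :=
  A.rank = r ∧ 0 < d ∧ singularValue A 1 ≤ γ * d ∧ d < singularValue A r ∧
    (rowSupport A).card ≤ s

/-- `V` is a matrix of top-r right singular vectors of `M`: the columns of `V` are orthonormal
eigenvectors of `MᵀM`, the j-th column with eigenvalue `σ_j(M)²`. -/
def IsRightSingularVectors {I J : Type*} [Fintype I] [Fintype J] {r : ℕ}
    (M : Matrix I J ℝ) (V : Matrix J (Fin r) ℝ) : Prop :=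
  Vᵀ * V = 1 ∧ ∀ j : Fin r,
    (Mᵀ * M).mulVec (fun i => V i j) = (singularValue M (j.1 + 1)) ^ 2 • (fun i => V i j)

/-- `U` is a matrix of top-r left singular vectors of `M`. -/
def IsLeftSingularVectors {I J : Type*} [Fintype I] [Fintype J] {r : ℕ}
    (M : Matrix I J ℝ) (U : Matrix I (Fin r) ℝ) : Prop :=
  IsRightSingularVectors Mᵀ U

instance matrixMeasurableSpace {n m : ℕ} : MeasurableSpace (Matrix (Fin n) (Fin m) ℝ) :=
  (inferInstance : MeasurableSpace (Fin n → Fin m → ℝ))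

/-- Law of an n×m random matrix with i.i.d. N(0, v) entries. -/
def gaussianMatrix (n m : ℕ) (v : ℝ≥0) : Measure (Matrix (Fin n) (Fin m) ℝ) :=
  Measure.pi fun _ : Fin n => Measure.pi fun _ : Fin m => gaussianReal 0 v

open Classical in
/-- Kullback–Leibler divergence D(P‖Q). -/
def klDivM {Ω : Type*} [MeasurableSpace Ω] (P Q : Measure Ω) : ℝ≥0∞ :=
  if P ≪ Q ∧ Integrable (fun x => Real.log (P.rnDeriv Q x).toReal) P
  then ENNReal.ofReal (∫ x, Real.log (P.rnDeriv Q x).toReal ∂P)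
  else ∞

/-- ε-packing number of T with respect to the distance ρ: the maximal cardinality of a subset
of T whose pairwise ρ-distances are all at least ε. -/
def packingNumber {α : Type*} (T : Set α) (ρ : α → α → ℝ) (ε : ℝ) : ℕ :=
  sSup { k | ∃ S : Finset α, ↑S ⊆ T ∧ (∀ x ∈ S, ∀ y ∈ S, x ≠ y → ε ≤ ρ x y) ∧ S.card = k }

/-- Moore–Penrose pseudoinverse (characterized by the four Penrose equations). -/
def IsMoorePenrose {k : ℕ} (M Mi : Matrix (Fin k) (Fin k) ℝ) : Prop :=
  M * Mi * M = M ∧ Mi * M * Mi = Mi ∧ (M * Mi)ᵀ = M * Mi ∧ (Mi * M)ᵀ = Mi * M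

lemma gm_prob (n m : ℕ) (v : ℝ≥0) : IsProbabilityMeasure (gaussianMatrix n m v) :=
  inferInstanceAs (IsProbabilityMeasure
    (Measure.pi (fun _ : Fin n => (Measure.pi (fun _ : Fin m => gaussianReal 0 v) : Measure (Fin m → ℝ)))
      : Measure (Fin n → Fin m → ℝ)))

lemma gauss_sq_mgf (v : ℝ≥0) (hv : v ≠ 0) (q : ℝ) (hq : 1 ≤ q) :
    ∫ x, Real.exp ((1 - 1 / q ^ 2) / 2 * (x ^ 2 / v)) ∂(gaussianReal 0 v) = q := by
  have hq0 : 0 < q := by linarith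
  rw [integral_gaussianReal_eq_integral_smul hv]
  set w : ℝ≥0 := v * (Real.toNNReal q) ^ 2 with hw
  have hw0 : w ≠ 0 := by
    have : Real.toNNReal q ≠ 0 := by simpa using hq0
    positivity
  have hvr : (0 : ℝ) < v := by positivity
  have hwr : (w : ℝ) = v * q ^ 2 := by
    simp [hw, Real.coe_toNNReal q hq0.le]
  have key : ∀ x : ℝ, gaussianPDFReal 0 v x • Real.exp ((1 - 1 / q ^ 2) / 2 * (x ^ 2 / v))
      = q * gaussianPDFReal 0 w x := by
    intro x
    simp only [gaussianPDFReal, smul_eq_mul, hwr]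
    have h1 : Real.sqrt (2 * Real.pi * (v * q ^ 2)) = Real.sqrt (2 * Real.pi * v) * q := by
      rw [← mul_assoc, Real.sqrt_mul (by positivity), Real.sqrt_sq hq0.le]
    rw [h1, mul_assoc, ← Real.exp_add]
    have h2 : -(x - 0) ^ 2 / (2 * (v:ℝ)) + (1 - 1 / q ^ 2) / 2 * (x ^ 2 / v)
        = -(x - 0) ^ 2 / (2 * (v * q ^ 2)) := by
      field_simp
      ring
    rw [h2]
    have h3 : Real.sqrt (2 * Real.pi * v) ≠ 0 := by positivity
    field_simp
  simp_rw [key]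
  rw [integral_const_mul, integral_gaussianPDFReal_eq_one _ hw0, mul_one]

lemma chi_tail {r : ℕ} (hr : 1 ≤ r) (v : ℝ≥0) (hv : v ≠ 0) (t : ℝ) (ht : 0 ≤ t) :
    (Measure.pi fun _ : Fin r => gaussianReal 0 v).real
      {y | (v : ℝ) * (Real.sqrt r + t) ^ 2 ≤ ∑ i, y i ^ 2} ≤ Real.exp (-(t ^ 2 / 2)) := by
  have hr0 : (0 : ℝ) < r := by exact_mod_cast hr
  have hsr : 0 < Real.sqrt r := Real.sqrt_pos.2 hr0
  have hsq : Real.sqrt r ^ 2 = r := Real.sq_sqrt hr0.le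
  have hvr : (0 : ℝ) < v := by positivity
  set q : ℝ := 1 + t / Real.sqrt r with hq
  have hq1 : 1 ≤ q := by
    have : 0 ≤ t / Real.sqrt r := by positivity
    linarith
  have hqpos : 0 < q := by linarith
  set θ : ℝ := (1 - 1 / q ^ 2) / 2 with hθ
  have hθ0 : 0 ≤ θ := by
    have : 1 / q ^ 2 ≤ 1 := by
      rw [div_le_one (by positivity)]
      nlinarith
    simp only [hθ]; linarith
  set μ := (Measure.pi fun _ : Fin r => gaussianReal 0 v) with hμ
  set F : (Fin r → ℝ) → ℝ := fun y => ∏ i, Real.exp (θ * (y i ^ 2 / v)) with hF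
  have hint1 : Integrable (fun x => Real.exp (θ * (x ^ 2 / v))) (gaussianReal 0 v) := by
    by_contra hcon
    have := gauss_sq_mgf v hv q hq1
    rw [integral_undef hcon] at this
    linarith
  have hFint : Integrable F μ := Integrable.fintype_prod (fun _ => hint1)
  have hFval : ∫ y, F y ∂μ = q ^ r := by
    rw [hF, hμ, integral_fintype_prod_eq_prod (f := fun (_ : Fin r) (x : ℝ) => Real.exp (θ * (x ^ 2 / v)))]
    simp_rw [hθ, gauss_sq_mgf v hv q hq1]
    simp
  have hFexp : ∀ y, F y = Real.exp (θ * ((∑ i, y i ^ 2) / v)) := by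
    intro y
    rw [hF]
    simp only
    rw [← Real.exp_sum, Finset.sum_div, Finset.mul_sum]
  have hM := mul_meas_ge_le_integral_of_nonneg (μ := μ) (f := F)
    (Filter.Eventually.of_forall fun y => by simp only [hFexp]; positivity) hFint
    (Real.exp (θ * (Real.sqrt r + t) ^ 2))
  rw [hFval] at hM
  have hsub : μ.real {y | (v : ℝ) * (Real.sqrt r + t) ^ 2 ≤ ∑ i, y i ^ 2}
      ≤ μ.real {y | Real.exp (θ * (Real.sqrt r + t) ^ 2) ≤ F y} := by
    apply measureReal_mono
    · intro y hy
      simp only [mem_ofPred_eq] at hy ⊢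
      rw [hFexp, Real.exp_le_exp]
      apply mul_le_mul_of_nonneg_left _ hθ0
      rw [le_div_iff₀ hvr]
      linarith
    · exact measure_ne_top _ _
  have hqe : q ^ r ≤ Real.exp (Real.sqrt r * t) := by
    have h1 : q ≤ Real.exp (t / Real.sqrt r) := by
      have := Real.add_one_le_exp (t / Real.sqrt r)
      linarith
    calc q ^ r ≤ Real.exp (t / Real.sqrt r) ^ r := by gcongr
      _ = Real.exp (Real.sqrt r * t) := by
        rw [← Real.exp_nat_mul]
        congr 1
        nth_rewrite 1 [← hsq]
        field_simp
  have hθu : θ * (Real.sqrt r + t) ^ 2 = Real.sqrt r * t + t ^ 2 / 2 := by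
    have hqq : Real.sqrt r + t = Real.sqrt r * q := by
      rw [hq]; field_simp
    have : θ * (Real.sqrt r + t) ^ 2 = ((Real.sqrt r + t) ^ 2 - Real.sqrt r ^ 2) / 2 := by
      rw [hqq, hθ]; field_simp
    rw [this]; ring
  rw [hθu] at hM hsub
  have hpos := Real.exp_pos (Real.sqrt r * t + t ^ 2 / 2)
  have : μ.real {y | Real.exp (Real.sqrt r * t + t ^ 2 / 2) ≤ F y} ≤ Real.exp (-(t ^ 2 / 2)) := by
    have h3 : Real.exp (Real.sqrt r * t + t ^ 2 / 2) * Real.exp (-(t^2/2)) = Real.exp (Real.sqrt r * t) := by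
      rw [← Real.exp_add]; congr 1; ring
    refine le_of_mul_le_mul_left ?_ hpos
    rw [h3]
    exact hM.trans hqe
  exact hsub.trans this

/-- Law of `Vᵀ zᵀ x`. -/
lemma law_row {n m r : ℕ} (x : Fin n → ℝ) (V0 : Matrix (Fin m) (Fin r) ℝ) (hV : V0ᵀ * V0 = 1)
    (v w : ℝ≥0) (hw : (w : ℝ) = v * ∑ i, x i ^ 2) :
    (gaussianMatrix n m v).map (fun z => x ᵥ* (z * V0)) =
      Measure.pi fun _ : Fin r => gaussianReal 0 w := by
  have : IsProbabilityMeasure (gaussianMatrix n m v) := gm_prob n m v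
  have hmeas : Measurable (fun z : Matrix (Fin n) (Fin m) ℝ => x ᵥ* (z * V0)) := by
    refine measurable_pi_lambda _ fun l => ?_
    simp only [Matrix.vecMul, dotProduct, Matrix.mul_apply]
    refine Finset.measurable_sum _ fun i _ => Measurable.const_mul
      (Finset.measurable_sum _ fun k _ => Measurable.mul_const ?_ _) _
    exact (measurable_pi_apply k).comp (measurable_pi_apply i)
  have : IsFiniteMeasure ((gaussianMatrix n m v).map (fun z => x ᵥ* (z * V0))) := by infer_instance
  rw [← charFun_eq_pi_iff]
  intro t
  rw [Measure.map_map (by fun_prop) hmeas, charFun_apply,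
    integral_map ((WithLp.measurable_toLp 2 _).comp hmeas).aemeasurable (by fun_prop)]
  set u : Fin m → ℝ := V0 *ᵥ (WithLp.ofLp t) with hu
  have h1 : ∀ z : Matrix (Fin n) (Fin m) ℝ,
      Complex.exp (((inner ℝ ((WithLp.toLp 2 ∘ fun z : Matrix (Fin n) (Fin m) ℝ => x ᵥ* (z * V0)) z) t : ℝ) : ℂ) * Complex.I)
      = ∏ i, ∏ k, Complex.exp (((z i k * (x i * u k) : ℝ) : ℂ) * Complex.I) := by
    intro z
    simp_rw [← Complex.exp_sum]
    congr 1
    have : (inner ℝ ((WithLp.toLp 2 ∘ fun z : Matrix (Fin n) (Fin m) ℝ => x ᵥ* (z * V0)) z) t : ℝ)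
        = ∑ i, ∑ k, z i k * (x i * u k) := by
      rw [PiLp.inner_apply]
      simp only [Function.comp]
      have e1 : (∑ i, inner ℝ ((WithLp.toLp 2 (x ᵥ* (z * V0)) : EuclideanSpace ℝ (Fin r)) i) (t i))
          = (x ᵥ* (z * V0)) ⬝ᵥ (WithLp.ofLp t) := by
        simp [dotProduct, mul_comm]
      rw [e1, ← Matrix.dotProduct_mulVec, ← Matrix.mulVec_mulVec, ← hu]
      simp only [dotProduct, Matrix.mulVec, Finset.mul_sum]
      refine Finset.sum_congr rfl fun i _ => Finset.sum_congr rfl fun k _ => by ring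
    rw [this]
    push_cast
    simp_rw [Finset.sum_mul]
  simp_rw [h1]
  unfold gaussianMatrix
  have h2 : ∫ z : Fin n → Fin m → ℝ, ∏ i, ∏ k, Complex.exp (((z i k * (x i * u k) : ℝ) : ℂ) * Complex.I)
      ∂(Measure.pi fun _ : Fin n => Measure.pi fun _ : Fin m => gaussianReal 0 v)
      = ∏ i, ∏ k, charFun (gaussianReal 0 v) (x i * u k) := by
    rw [integral_fintype_prod_eq_prod (f := fun (i : Fin n) (zi : Fin m → ℝ) => ∏ k, Complex.exp (((zi k * (x i * u k) : ℝ) : ℂ) * Complex.I))]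
    refine Finset.prod_congr rfl fun i _ => ?_
    rw [integral_fintype_prod_eq_prod (f := fun (k : Fin m) (y : ℝ) => Complex.exp (((y * (x i * u k) : ℝ) : ℂ) * Complex.I))]
    refine Finset.prod_congr rfl fun k _ => ?_
    rw [charFun_apply_real]
    congr 1; ext y; congr 1; push_cast; ring
  refine h2.trans ?_
  simp_rw [charFun_gaussianReal, ← Complex.exp_sum]
  congr 1
  have hun : ∑ k, u k ^ 2 = ∑ l, t l ^ 2 := by
    have : u ⬝ᵥ u = (WithLp.ofLp t) ⬝ᵥ (WithLp.ofLp t) := by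
      rw [hu, Matrix.dotProduct_mulVec, Matrix.vecMul_mulVec, ← Matrix.dotProduct_mulVec] 
      rw [hV, Matrix.one_mulVec]
    simpa [dotProduct, sq] using this
  have hR : ∑ i, ∑ k, -((v:ℝ) * (x i * u k) ^ 2 / 2) = ∑ l, -((w:ℝ) * t l ^ 2 / 2) := by
    have e1 : ∑ i, ∑ k, -((v:ℝ) * (x i * u k) ^ 2 / 2) = -(v / 2) * ((∑ i, x i ^ 2) * ∑ k, u k ^ 2) := by
      rw [Finset.sum_mul_sum, Finset.mul_sum]
      refine Finset.sum_congr rfl fun i _ => ?_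
      rw [Finset.mul_sum]
      refine Finset.sum_congr rfl fun k _ => by ring
    rw [e1, hun, hw, ← mul_assoc, Finset.mul_sum]
    refine Finset.sum_congr rfl fun k _ => by ring
  have := congrArg (fun y : ℝ => (y : ℂ)) hR
  push_cast at this
  simpa using this

/-- Tail bound for one column. -/
lemma row_tail {n m r : ℕ} (hr : 1 ≤ r) (x : Fin n → ℝ) (V0 : Matrix (Fin m) (Fin r) ℝ)
    (hV : V0ᵀ * V0 = 1) (σ t : ℝ) (hσ : 0 < σ) (ht : 0 ≤ t) :
    (gaussianMatrix n m (Real.toNNReal ((2 * σ) ^ 2))).real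
      {z | 2 * σ * l2norm x * (Real.sqrt r + t) < l2norm (x ᵥ* (z * V0))}
      ≤ Real.exp (-(t ^ 2 / 2)) := by
  by_cases hx : x = 0
  · have : {z : Matrix (Fin n) (Fin m) ℝ | 2 * σ * l2norm x * (Real.sqrt r + t) < l2norm (x ᵥ* (z * V0))} = ∅ := by
      subst hx
      ext z
      simp [l2norm]
    rw [this]; simp; positivity
  have hxs : 0 < ∑ i, x i ^ 2 := by
    obtain ⟨i, hi⟩ := Function.ne_iff.1 hx
    have hi' : 0 < x i ^ 2 := by
      have : x i ≠ 0 := hi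
      positivity
    exact lt_of_lt_of_le hi' (Finset.single_le_sum (f := fun i => x i ^ 2) (fun i _ => sq_nonneg _) (Finset.mem_univ i))
  set v : ℝ≥0 := Real.toNNReal ((2 * σ) ^ 2) with hv
  have hvr : (v : ℝ) = (2 * σ) ^ 2 := by simp [hv, Real.coe_toNNReal _ (sq_nonneg (2 * σ))]
  set w : ℝ≥0 := Real.toNNReal ((2 * σ) ^ 2 * ∑ i, x i ^ 2) with hw
  have hwr : (w : ℝ) = (2 * σ) ^ 2 * ∑ i, x i ^ 2 := Real.coe_toNNReal _ (by positivity)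
  have hw0 : w ≠ 0 := by
    intro h
    rw [h] at hwr
    have : 0 < (2 * σ) ^ 2 * ∑ i, x i ^ 2 := by positivity
    simp at hwr
    rcases hwr with h | h <;> linarith
  have hmeas : Measurable (fun z : Matrix (Fin n) (Fin m) ℝ => x ᵥ* (z * V0)) := by
    refine measurable_pi_lambda _ fun l => ?_
    simp only [Matrix.vecMul, dotProduct, Matrix.mul_apply]
    refine Finset.measurable_sum _ fun i _ => Measurable.const_mul
      (Finset.measurable_sum _ fun k _ => Measurable.mul_const ?_ _) _
    exact (measurable_pi_apply k).comp (measurable_pi_apply i)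
  have hlaw := law_row x V0 hV v w (by rw [hwr, hvr])
  have htail := chi_tail hr w hw0 t ht
  have hms : MeasurableSet {y : Fin r → ℝ | (w : ℝ) * (Real.sqrt r + t) ^ 2 ≤ ∑ i, y i ^ 2} :=
    measurableSet_le measurable_const (by fun_prop)
  rw [← hlaw, map_measureReal_apply hmeas hms] at htail
  refine le_trans (measureReal_mono ?_ ?_) htail
  · intro z hz
    simp only [mem_ofPred_eq, mem_preimage] at hz ⊢
    rw [hwr]
    have h0 : 0 ≤ l2norm x := Real.sqrt_nonneg _
    have h1 : l2norm x ^ 2 = ∑ i, x i ^ 2 := Real.sq_sqrt hxs.le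
    have h2 : l2norm (x ᵥ* (z * V0)) ^ 2 = ∑ i, (x ᵥ* (z * V0)) i ^ 2 :=
      Real.sq_sqrt (Finset.sum_nonneg fun i _ => sq_nonneg _)
    rw [← h1, ← h2]
    have h3 : 0 ≤ 2 * σ * l2norm x * (Real.sqrt r + t) := by positivity
    calc _ = (2 * σ * l2norm x * (Real.sqrt r + t)) ^ 2 := by ring
      _ ≤ _ := by gcongr
  · have : IsProbabilityMeasure (gaussianMatrix n m v) := gm_prob n m v
    exact measure_ne_top _ _

lemma good_event {n m p r : ℕ} (hr : 1 ≤ r) (hp : 1 ≤ p) (X : Matrix (Fin n) (Fin p) ℝ)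
    (V0 : Matrix (Fin m) (Fin r) ℝ) (hV : V0ᵀ * V0 = 1) (σ lam : ℝ) (hσ : 0 < σ)
    (hlam : ∀ j : Fin p,
        4 * σ * l2norm (Xᵀ j) * (Real.sqrt r + Real.sqrt (4 * Real.log p)) ≤ lam)
    (E : Set (Matrix (Fin n) (Fin m) ℝ))
    (hE : ∀ z, (∀ j, l2norm (Xᵀ j ᵥ* (z * V0)) ≤ lam / 2) → z ∈ E) :
    ENNReal.ofReal (1 - 1 / (p : ℝ)) ≤ gaussianMatrix n m (Real.toNNReal ((2 * σ) ^ 2)) E := by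
  set μ := gaussianMatrix n m (Real.toNNReal ((2 * σ) ^ 2)) with hμ
  have hprob : IsProbabilityMeasure μ := gm_prob _ _ _
  have hp0 : (0 : ℝ) < p := by exact_mod_cast hp
  set t := Real.sqrt (4 * Real.log p) with ht
  set bad : Fin p → Set (Matrix (Fin n) (Fin m) ℝ) := fun j =>
    {z | 2 * σ * l2norm (Xᵀ j) * (Real.sqrt r + t) < l2norm (Xᵀ j ᵥ* (z * V0))} with hbad
  have hlog : 0 ≤ Real.log p := Real.log_nonneg (by exact_mod_cast hp)
  have hexp : Real.exp (-(t ^ 2 / 2)) = 1 / (p : ℝ) ^ 2 := by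
    rw [ht, Real.sq_sqrt (by positivity)]
    have : -(4 * Real.log p / 2) = -(Real.log ((p:ℝ) ^ 2)) := by
      rw [Real.log_pow]; push_cast; ring
    rw [this, Real.exp_neg, Real.exp_log (by positivity), one_div]
  have hb : ∀ j, μ.real (bad j) ≤ 1 / (p : ℝ) ^ 2 := fun j => by
    rw [← hexp]; exact row_tail hr _ V0 hV σ t hσ (Real.sqrt_nonneg _)
  have hcov : (univ : Set (Matrix (Fin n) (Fin m) ℝ)) ⊆ E ∪ ⋃ j, bad j := by
    intro z _
    by_cases h : z ∈ ⋃ j, bad j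
    · exact Or.inr h
    · left
      apply hE
      intro j
      have : ¬ z ∈ bad j := fun hj => h (mem_iUnion.2 ⟨j, hj⟩)
      have h2 : l2norm (Xᵀ j ᵥ* (z * V0)) ≤ 2 * σ * l2norm (Xᵀ j) * (Real.sqrt r + t) := by
        by_contra hc
        exact this (not_le.1 hc)
      have := hlam j
      linarith
  have h1 : (1 : ℝ) ≤ μ.real E + ∑ j, μ.real (bad j) := by
    calc (1 : ℝ) = μ.real univ := by simp
      _ ≤ μ.real (E ∪ ⋃ j, bad j) := measureReal_mono hcov (measure_ne_top _ _)
      _ ≤ μ.real E + μ.real (⋃ j, bad j) := measureReal_union_le _ _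
      _ ≤ _ := by gcongr; exact measureReal_iUnion_fintype_le _
  have h2 : ∑ j, μ.real (bad j) ≤ 1 / (p : ℝ) := by
    calc _ ≤ ∑ _j : Fin p, 1 / (p : ℝ) ^ 2 := Finset.sum_le_sum fun j _ => hb j
      _ = 1 / (p : ℝ) := by simp; field_simp
  calc ENNReal.ofReal (1 - 1 / (p : ℝ)) ≤ ENNReal.ofReal (μ.real E) :=
        ENNReal.ofReal_le_ofReal (by linarith)
    _ = μ E := by simp [measureReal_def]

section basics
variable {I J L : Type*} [Fintype I] [Fintype J] [Fintype L]

lemma l2_nonneg (v : I → ℝ) : 0 ≤ l2norm v := Real.sqrt_nonneg _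

lemma l2_sq (v : I → ℝ) : l2norm v ^ 2 = ∑ i, v i ^ 2 :=
  Real.sq_sqrt (Finset.sum_nonneg fun i _ => sq_nonneg _)

lemma l2_sq_dot (v : I → ℝ) : l2norm v ^ 2 = v ⬝ᵥ v := by
  rw [l2_sq]; simp [dotProduct, sq]

lemma l2_dot (v w : I → ℝ) : v ⬝ᵥ w ≤ l2norm v * l2norm w :=
  Real.sum_mul_le_sqrt_mul_sqrt _ _ _

lemma l2_eq (v : I → ℝ) : l2norm v = ‖(WithLp.toLp 2 v : EuclideanSpace ℝ I)‖ := by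
  rw [EuclideanSpace.norm_eq]; simp [l2norm]

lemma l2_smul (c : ℝ) (v : I → ℝ) : l2norm (c • v) = |c| * l2norm v := by
  rw [l2_eq, l2_eq, WithLp.toLp_smul, norm_smul, Real.norm_eq_abs]

lemma l2_add (v w : I → ℝ) : l2norm (v + w) ≤ l2norm v + l2norm w := by
  rw [l2_eq, l2_eq, l2_eq, WithLp.toLp_add]; exact norm_add_le _ _

lemma l2_neg (v : I → ℝ) : l2norm (-v) = l2norm v := by simp [l2norm]

lemma l2_eq_zero {v : I → ℝ} : l2norm v = 0 ↔ v = 0 := by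
  rw [l2_eq, norm_eq_zero]; simp

lemma l2_pos {v : I → ℝ} (h : v ≠ 0) : 0 < l2norm v :=
  lt_of_le_of_ne (l2_nonneg v) (fun h' => h (l2_eq_zero.1 h'.symm))

/-- Frobenius inner product. -/
def fdot (M N : Matrix I J ℝ) : ℝ := ∑ i, ∑ j, M i j * N i j

lemma fr_nonneg (M : Matrix I J ℝ) : 0 ≤ frobNorm M := Real.sqrt_nonneg _

lemma fr_sq (M : Matrix I J ℝ) : frobNorm M ^ 2 = ∑ i, ∑ j, M i j ^ 2 :=
  Real.sq_sqrt (Finset.sum_nonneg fun i _ => Finset.sum_nonneg fun j _ => sq_nonneg _)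

lemma fr_sq_fdot (M : Matrix I J ℝ) : frobNorm M ^ 2 = fdot M M := by
  rw [fr_sq]; simp [fdot, sq]

lemma fr_sq_rows (M : Matrix I J ℝ) : frobNorm M ^ 2 = ∑ i, l2norm (M i) ^ 2 := by
  rw [fr_sq]; simp_rw [l2_sq]

lemma fr_sq_cols (M : Matrix I J ℝ) : frobNorm M ^ 2 = ∑ j, l2norm (Mᵀ j) ^ 2 := by
  rw [fr_sq, Finset.sum_comm]; simp_rw [l2_sq]; rfl

lemma fdot_cols (M N : Matrix I J ℝ) : fdot M N = ∑ j, (Mᵀ j) ⬝ᵥ (Nᵀ j) := by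
  rw [fdot, Finset.sum_comm]; rfl

lemma fdot_trace (M N : Matrix I J ℝ) : fdot M N = (Mᵀ * N).trace := by
  rw [fdot_cols]; rfl

lemma fr_eq_l2 (M : Matrix I J ℝ) : frobNorm M = l2norm (fun ij : I × J => M ij.1 ij.2) := by
  simp [frobNorm, l2norm, Fintype.sum_prod_type]

lemma fdot_le (M N : Matrix I J ℝ) : fdot M N ≤ frobNorm M * frobNorm N := by
  rw [fr_eq_l2, fr_eq_l2]
  refine le_trans (le_of_eq ?_) (l2_dot _ _)
  simp [fdot, dotProduct, Fintype.sum_prod_type]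

lemma fdot_add_right (M N N' : Matrix I J ℝ) : fdot M (N + N') = fdot M N + fdot M N' := by
  simp [fdot, mul_add, Finset.sum_add_distrib]

lemma fdot_mul (X : Matrix I J ℝ) (M : Matrix J L ℝ) (N : Matrix I L ℝ) :
    fdot N (X * M) = fdot (Xᵀ * N) M := by
  simp only [fdot_trace, Matrix.transpose_mul, Matrix.transpose_transpose, Matrix.mul_assoc]

lemma col_mul (X : Matrix I J ℝ) (M : Matrix J L ℝ) (l : L) : (X * M)ᵀ l = X *ᵥ (Mᵀ l) := by
  ext i; simp [Matrix.mul_apply, Matrix.mulVec, dotProduct]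

lemma l2_mulVec_le (X : Matrix I J ℝ) (v : J → ℝ) : l2norm (X *ᵥ v) ≤ frobNorm X * l2norm v := by
  refine abs_le_of_sq_le_sq' ?_ (mul_nonneg (fr_nonneg _) (l2_nonneg _)) |>.2
  rw [l2_sq, mul_pow, fr_sq_rows, Finset.sum_mul]
  refine Finset.sum_le_sum fun i _ => ?_
  have h := l2_dot (X i) v
  have h' := l2_dot (-(X i)) v
  rw [l2_neg, neg_dotProduct] at h'
  rw [← mul_pow]
  exact sq_le_sq' (by simp only [Matrix.mulVec]; linarith) h

end basics

section kappa
variable {n p r : ℕ} (X : Matrix (Fin n) (Fin p) ℝ)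

lemma kminus_le (k : ℕ) (v : Fin p → ℝ) (B : Finset (Fin p)) (hB : B.card ≤ k)
    (hv : ∀ i, i ∉ B → v i = 0) : kappaMinusSq X k * l2norm v ^ 2 ≤ l2norm (X *ᵥ v) ^ 2 := by
  by_cases hk : k ≤ p
  · by_cases h0 : v = 0
    · subst h0; simp [l2norm]
    have hpos := l2_pos h0
    obtain ⟨B', hB', hc⟩ := Finset.exists_superset_card_eq hB (by simpa using hk)
    have hmem : l2norm (X *ᵥ ((l2norm v)⁻¹ • v)) ^ 2 ∈ { t | ∃ B : Finset (Fin p), B.card = k ∧ ∃ v : Fin p → ℝ,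
        (∀ i, i ∉ B → v i = 0) ∧ l2norm v = 1 ∧ t = l2norm (X.mulVec v) ^ 2 } := by
      refine ⟨B', hc, (l2norm v)⁻¹ • v, fun i hi => ?_, ?_, rfl⟩
      · simp [hv i (fun h => hi (hB' h))]
      · rw [l2_smul, abs_of_pos (by positivity), inv_mul_cancel₀ hpos.ne']
    have := csInf_le ⟨0, by rintro _ ⟨_, _, _, _, _, rfl⟩; positivity⟩ hmem
    rw [Matrix.mulVec_smul, l2_smul, abs_of_pos (by positivity), mul_pow] at this
    calc _ ≤ (l2norm v)⁻¹ ^ 2 * l2norm (X *ᵥ v) ^ 2 * l2norm v ^ 2 := by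
          gcongr; exact this
      _ = _ := by field_simp
  · have : kappaMinusSq X k = 0 := by
      unfold kappaMinusSq
      convert Real.sInf_empty
      ext t
      simp only [mem_ofPred_eq, mem_empty_iff_false, iff_false]
      rintro ⟨B, hB, _⟩
      have := Finset.card_le_univ B
      simp at this; omega
    rw [this, zero_mul]; positivity

lemma kplus_ge (k : ℕ) (hk : k ≤ p) (v : Fin p → ℝ) (B : Finset (Fin p)) (hB : B.card ≤ k)
    (hv : ∀ i, i ∉ B → v i = 0) : l2norm (X *ᵥ v) ^ 2 ≤ kappaPlusSq X k * l2norm v ^ 2 := by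
  by_cases h0 : v = 0
  · subst h0; simp [l2norm]
  have hpos := l2_pos h0
  obtain ⟨B', hB', hc⟩ := Finset.exists_superset_card_eq hB (by simpa using hk)
  have hmem : l2norm (X *ᵥ ((l2norm v)⁻¹ • v)) ^ 2 ∈ { t | ∃ B : Finset (Fin p), B.card = k ∧ ∃ v : Fin p → ℝ,
      (∀ i, i ∉ B → v i = 0) ∧ l2norm v = 1 ∧ t = l2norm (X.mulVec v) ^ 2 } := by
    refine ⟨B', hc, (l2norm v)⁻¹ • v, fun i hi => ?_, ?_, rfl⟩
    · simp [hv i (fun h => hi (hB' h))]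
    · rw [l2_smul, abs_of_pos (by positivity), inv_mul_cancel₀ hpos.ne']
  have := le_csSup ⟨frobNorm X ^ 2, by
    rintro _ ⟨_, _, u, _, hu, rfl⟩
    have h := l2_mulVec_le X u
    rw [hu, mul_one] at h
    have := l2_nonneg (X *ᵥ u)
    gcongr⟩ hmem
  rw [Matrix.mulVec_smul, l2_smul, abs_of_pos (by positivity), mul_pow] at this
  calc l2norm (X *ᵥ v) ^ 2 = (l2norm v)⁻¹ ^ 2 * l2norm (X *ᵥ v) ^ 2 * l2norm v ^ 2 := by field_simp
    _ ≤ _ := by gcongr; exact this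

lemma kappa_le_p (k : ℕ) (h : 0 < kappaMinusSq X k) : k ≤ p := by
  by_contra hk
  have : kappaMinusSq X k = 0 := by
    unfold kappaMinusSq
    convert Real.sInf_empty
    ext t
    simp only [mem_ofPred_eq, mem_empty_iff_false, iff_false]
    rintro ⟨B, hB, _⟩
    have := Finset.card_le_univ B
    simp at this; omega
  linarith

lemma cross_vec (k : ℕ) (hk : k ≤ p) (τ : ℝ)
    (hτ : kappaPlusSq X k - kappaMinusSq X (2 * k) ≤ τ)
    (u v : Fin p → ℝ) (B B' : Finset (Fin p)) (hB : B.card ≤ k) (hB' : B'.card ≤ k)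
    (hd : Disjoint B B') (hu : ∀ i, i ∉ B → u i = 0) (hv : ∀ i, i ∉ B' → v i = 0) :
    |(X *ᵥ u) ⬝ᵥ (X *ᵥ v)| ≤ τ * (l2norm u * l2norm v) := by
  by_cases hu0 : u = 0
  · subst hu0; simp [l2norm]
  by_cases hv0 : v = 0
  · subst hv0; simp [l2norm]
  have hα := l2_pos hu0
  have hβ := l2_pos hv0
  set α := l2norm u
  set β := l2norm v
  have huv : u ⬝ᵥ v = 0 := by
    refine Finset.sum_eq_zero fun i _ => ?_
    by_cases hi : i ∈ B
    · rw [hv i (Finset.disjoint_left.1 hd hi), mul_zero]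
    · rw [hu i hi, zero_mul]
  have key : ∀ ε : ℝ, ε ^ 2 = 1 → -(ε * ((X *ᵥ u) ⬝ᵥ (X *ᵥ v))) ≤ τ * (α * β) := by
    intro ε hε
    have h1 := kminus_le X (2 * k) (β • u + (ε * α) • v) (B ∪ B')
      (le_trans (Finset.card_union_le _ _) (by omega)) (fun i hi => by
        simp only [Finset.mem_union, not_or] at hi
        simp [hu i hi.1, hv i hi.2])
    have h2 := kplus_ge X k hk u B hB hu
    have h3 := kplus_ge X k hk v B' hB' hv
    have e1 : l2norm (β • u + (ε * α) • v) ^ 2 = 2 * (α ^ 2 * β ^ 2) := by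
      rw [l2_sq_dot]
      simp only [add_dotProduct, dotProduct_add, smul_dotProduct, dotProduct_smul, smul_eq_mul,
        dotProduct_comm v u, huv, ← l2_sq_dot]
      change β * (β * α ^ 2 + ε * α * 0) + ε * α * (β * 0 + ε * α * β ^ 2) = _
      linear_combination (α ^ 2 * β ^ 2) * hε
    have e2 : l2norm (X *ᵥ (β • u + (ε * α) • v)) ^ 2 = β ^ 2 * l2norm (X *ᵥ u) ^ 2
        + α ^ 2 * l2norm (X *ᵥ v) ^ 2 + 2 * (α * β) * (ε * ((X *ᵥ u) ⬝ᵥ (X *ᵥ v))) := by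
      rw [l2_sq_dot, Matrix.mulVec_add, Matrix.mulVec_smul, Matrix.mulVec_smul]
      simp only [add_dotProduct, dotProduct_add, smul_dotProduct, dotProduct_smul, smul_eq_mul,
        dotProduct_comm (X *ᵥ v) (X *ᵥ u), ← l2_sq_dot]
      linear_combination (α ^ 2 * l2norm (X *ᵥ v) ^ 2) * hε
    rw [e1, e2] at h1
    have h4 : β ^ 2 * l2norm (X *ᵥ u) ^ 2 ≤ β ^ 2 * (kappaPlusSq X k * α ^ 2) := by gcongr
    have h5 : α ^ 2 * l2norm (X *ᵥ v) ^ 2 ≤ α ^ 2 * (kappaPlusSq X k * β ^ 2) := by gcongr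
    have h6 : (kappaPlusSq X k - kappaMinusSq X (2 * k)) * (α ^ 2 * β ^ 2) ≤ τ * (α ^ 2 * β ^ 2) := by
      gcongr
    have hab : 0 < α * β := by positivity
    refine le_of_mul_le_mul_left ?_ hab
    nlinarith
  rw [abs_le]
  have k1 := key 1 (by norm_num)
  have k2 := key (-1) (by norm_num)
  constructor <;> linarith

open Classical in
/-- Keep only the rows in `T`. -/
def mask {p r : ℕ} (T : Finset (Fin p)) (D : Matrix (Fin p) (Fin r) ℝ) : Matrix (Fin p) (Fin r) ℝ :=
  Matrix.of fun i j => if i ∈ T then D i j else 0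

lemma mask_zero (T : Finset (Fin p)) (D : Matrix (Fin p) (Fin r) ℝ) (j : Fin r) (i : Fin p)
    (hi : i ∉ T) : (mask T D)ᵀ j i = 0 := by simp [mask, hi]

lemma mask_union (T T' : Finset (Fin p)) (h : Disjoint T T') (D : Matrix (Fin p) (Fin r) ℝ) :
    mask (T ∪ T') D = mask T D + mask T' D := by
  ext i j
  simp only [mask, Matrix.of_apply, Matrix.add_apply, Finset.mem_union]
  by_cases h1 : i ∈ T
  · have := Finset.disjoint_left.1 h h1
    simp [h1, this]
  · simp [h1]

lemma mask_univ (D : Matrix (Fin p) (Fin r) ℝ) : mask Finset.univ D = D := by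
  ext i j; simp [mask]

lemma mask_fr (T : Finset (Fin p)) (D : Matrix (Fin p) (Fin r) ℝ) :
    frobNorm (mask T D) ^ 2 = ∑ i ∈ T, l2norm (D i) ^ 2 := by
  rw [fr_sq, ← Finset.sum_subset (Finset.subset_univ T)]
  · refine Finset.sum_congr rfl fun i hi => ?_
    simp [mask, hi, l2_sq]
  · intro i _ hi
    simp [mask, hi]

lemma kminus_mat (k : ℕ) (T : Finset (Fin p)) (hT : T.card ≤ k) (D : Matrix (Fin p) (Fin r) ℝ) :
    kappaMinusSq X k * frobNorm (mask T D) ^ 2 ≤ frobNorm (X * mask T D) ^ 2 := by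
  rw [fr_sq_cols, fr_sq_cols, Finset.mul_sum]
  refine Finset.sum_le_sum fun j _ => ?_
  rw [col_mul]
  exact kminus_le X k _ T hT (mask_zero T D j)

lemma kplus_mat (k : ℕ) (hk : k ≤ p) (T : Finset (Fin p)) (hT : T.card ≤ k)
    (D : Matrix (Fin p) (Fin r) ℝ) :
    frobNorm (X * mask T D) ^ 2 ≤ kappaPlusSq X k * frobNorm (mask T D) ^ 2 := by
  rw [fr_sq_cols, fr_sq_cols, Finset.mul_sum]
  refine Finset.sum_le_sum fun j _ => ?_
  rw [col_mul]
  exact kplus_ge X k hk _ T hT (mask_zero T D j)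

lemma cross_mat (k : ℕ) (hk : k ≤ p) (τ : ℝ) (hτ0 : 0 ≤ τ)
    (hτ : kappaPlusSq X k - kappaMinusSq X (2 * k) ≤ τ)
    (T B : Finset (Fin p)) (hT : T.card ≤ k) (hB : B.card ≤ k) (hd : Disjoint T B)
    (D : Matrix (Fin p) (Fin r) ℝ) :
    |fdot (X * mask T D) (X * mask B D)| ≤ τ * frobNorm (mask T D) * frobNorm (mask B D) := by
  rw [fdot_cols]
  calc _ ≤ ∑ j, |((X * mask T D)ᵀ j) ⬝ᵥ ((X * mask B D)ᵀ j)| := Finset.abs_sum_le_sum_abs _ _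
    _ ≤ ∑ j, τ * (l2norm ((mask T D)ᵀ j) * l2norm ((mask B D)ᵀ j)) := by
        refine Finset.sum_le_sum fun j _ => ?_
        rw [col_mul, col_mul]
        exact cross_vec X k hk τ hτ _ _ T B hT hB hd (mask_zero T D j) (mask_zero B D j)
    _ = τ * ∑ j, l2norm ((mask T D)ᵀ j) * l2norm ((mask B D)ᵀ j) := by rw [Finset.mul_sum]
    _ ≤ τ * (frobNorm (mask T D) * frobNorm (mask B D)) := by
        gcongr
        refine le_trans (Real.sum_mul_le_sqrt_mul_sqrt _ _ _) (le_of_eq ?_)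
        rw [← fr_sq_cols, ← fr_sq_cols, Real.sqrt_sq (fr_nonneg _), Real.sqrt_sq (fr_nonneg _)]
    _ = _ := by ring
end kappa

lemma top_q {ι : Type*} [DecidableEq ι] (f : ι → ℝ) (q : ℕ) : ∀ R : Finset ι, q ≤ R.card →
    ∃ T ⊆ R, T.card = q ∧ ∀ x ∈ T, ∀ y ∈ R \ T, f y ≤ f x := by
  induction q with
  | zero => intro R _; exact ⟨∅, by simp, by simp, by simp⟩
  | succ q ih =>
    intro R hR
    obtain ⟨x0, hx0, hmax⟩ := Finset.exists_max_image R f (Finset.card_pos.1 (by omega))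
    obtain ⟨T, hT, hc, htop⟩ := ih (R.erase x0) (by rw [Finset.card_erase_of_mem hx0]; omega)
    have hx0T : x0 ∉ T := fun h => by simpa using hT h
    refine ⟨insert x0 T, ?_, ?_, ?_⟩
    · intro y hy
      rcases Finset.mem_insert.1 hy with rfl | h
      · exact hx0
      · exact Finset.mem_of_mem_erase (hT h)
    · rw [Finset.card_insert_of_notMem hx0T, hc]
    · intro x hx y hy
      simp only [Finset.mem_sdiff, Finset.mem_insert, not_or] at hy
      rcases Finset.mem_insert.1 hx with rfl | h
      · exact hmax y hy.1
      · exact htop x h y (by simp [hy])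

lemma block_aux {ι : Type*} [DecidableEq ι] (f : ι → ℝ) (hf : ∀ i, 0 ≤ f i) (q : ℕ) (hq : 1 ≤ q)
    (Φ : Finset ι → ℝ) (τ : ℝ) (hτ : 0 ≤ τ) (R0 : Finset ι)
    (hsub : ∀ A B, A ⊆ R0 → B ⊆ R0 → Disjoint A B → Φ (A ∪ B) ≤ Φ A + Φ B)
    (hsmall : ∀ B ⊆ R0, B.card ≤ q → Φ B ≤ τ * Real.sqrt (∑ i ∈ B, f i ^ 2)) :
    ∀ (N : ℕ) (R : Finset ι), R.card ≤ N → R ⊆ R0 → ∀ M : ℝ, 0 ≤ M → (∀ i ∈ R, f i ≤ M) →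
      Φ R ≤ τ * (Real.sqrt q * M + (∑ i ∈ R, f i) / Real.sqrt q) := by
  have hq0 : (0 : ℝ) < q := by exact_mod_cast hq
  have hs0 : 0 < Real.sqrt q := Real.sqrt_pos.2 hq0
  have hss : Real.sqrt q * Real.sqrt q = q := Real.mul_self_sqrt hq0.le
  have hbase : ∀ B ⊆ R0, B.card ≤ q → ∀ M : ℝ, 0 ≤ M → (∀ i ∈ B, f i ≤ M) →
      Φ B ≤ τ * (Real.sqrt q * M) := by
    intro B hB hc M hM hfM
    refine (hsmall B hB hc).trans ?_
    gcongr
    rw [Real.sqrt_le_left (by positivity), mul_pow, Real.sq_sqrt hq0.le]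
    calc ∑ i ∈ B, f i ^ 2 ≤ ∑ _i ∈ B, M ^ 2 := by
          refine Finset.sum_le_sum fun i hi => ?_
          have := hf i
          have := hfM i hi
          gcongr
      _ = B.card * M ^ 2 := by simp
      _ ≤ q * M ^ 2 := by gcongr
  intro N
  induction N with
  | zero =>
    intro R hR hR0 M hM hfM
    refine (hbase R hR0 (by omega) M hM hfM).trans ?_
    gcongr
    have : 0 ≤ (∑ i ∈ R, f i) / Real.sqrt q := div_nonneg (Finset.sum_nonneg fun i _ => hf i) hs0.le
    linarith
  | succ N ih =>
    intro R hR hR0 M hM hfM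
    by_cases hc : R.card ≤ q
    · refine (hbase R hR0 hc M hM hfM).trans ?_
      gcongr
      have : 0 ≤ (∑ i ∈ R, f i) / Real.sqrt q := div_nonneg (Finset.sum_nonneg fun i _ => hf i) hs0.le
      linarith
    · obtain ⟨T, hT, hTc, htop⟩ := top_q f q R (by omega)
      obtain ⟨x0, hx0, hmin⟩ := Finset.exists_min_image T f (Finset.card_pos.1 (by omega))
      have h1 := hbase T (hT.trans hR0) hTc.le M hM (fun i hi => hfM i (hT hi))
      have h2 := ih (R \ T) (by rw [Finset.card_sdiff_of_subset hT]; omega)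
        (Finset.sdiff_subset.trans hR0) (f x0) (hf _) (fun y hy => htop x0 hx0 y hy)
      have h3 := hsub T (R \ T) (hT.trans hR0) (Finset.sdiff_subset.trans hR0) Finset.disjoint_sdiff
      rw [Finset.union_sdiff_of_subset hT] at h3
      have h4 : q * f x0 ≤ ∑ i ∈ T, f i := by
        rw [← hTc, ← nsmul_eq_mul]
        exact Finset.card_nsmul_le_sum _ _ _ hmin
      have h5 : Real.sqrt q * f x0 ≤ (∑ i ∈ T, f i) / Real.sqrt q := by
        rw [le_div_iff₀ hs0]
        calc Real.sqrt q * f x0 * Real.sqrt q = (Real.sqrt q * Real.sqrt q) * f x0 := by ring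
          _ = q * f x0 := by rw [hss]
          _ ≤ _ := h4
      have h6 : ∑ i ∈ R, f i = ∑ i ∈ R \ T, f i + ∑ i ∈ T, f i := (Finset.sum_sdiff hT).symm
      rw [h6, add_div]
      have h7 : τ * (Real.sqrt q * f x0) ≤ τ * ((∑ i ∈ T, f i) / Real.sqrt q) := by gcongr
      linarith [h1, h2, h3, h7]

lemma block {ι : Type*} [DecidableEq ι] (f : ι → ℝ) (hf : ∀ i, 0 ≤ f i) (q : ℕ) (hq : 1 ≤ q)
    (R : Finset ι) : ∃ T ⊆ R, T.card ≤ q ∧ ∀ (Φ : Finset ι → ℝ) (τ : ℝ), 0 ≤ τ →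
    (∀ A B, A ⊆ R \ T → B ⊆ R \ T → Disjoint A B → Φ (A ∪ B) ≤ Φ A + Φ B) →
    (∀ B ⊆ R \ T, B.card ≤ q → Φ B ≤ τ * Real.sqrt (∑ i ∈ B, f i ^ 2)) →
    Φ (R \ T) ≤ τ * ((∑ i ∈ R, f i) / Real.sqrt q) := by
  have hq0 : (0 : ℝ) < q := by exact_mod_cast hq
  have hs0 : 0 < Real.sqrt q := Real.sqrt_pos.2 hq0
  have hss : Real.sqrt q * Real.sqrt q = q := Real.mul_self_sqrt hq0.le
  by_cases hc : R.card ≤ q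
  · refine ⟨R, subset_rfl, hc, fun Φ τ hτ _ hsmall => ?_⟩
    have := hsmall ∅ (by simp) (by simp)
    simp only [Finset.sum_empty, Real.sqrt_zero, mul_zero] at this
    rw [Finset.sdiff_self]
    refine this.trans ?_
    exact mul_nonneg hτ (div_nonneg (Finset.sum_nonneg fun i _ => hf i) hs0.le)
  · obtain ⟨T, hT, hTc, htop⟩ := top_q f q R (by omega)
    obtain ⟨x0, hx0, hmin⟩ := Finset.exists_min_image T f (Finset.card_pos.1 (by omega))
    refine ⟨T, hT, hTc.le, fun Φ τ hτ hsub hsmall => ?_⟩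
    have h2 := block_aux f hf q hq Φ τ hτ (R \ T) hsub hsmall _ (R \ T) le_rfl subset_rfl
      (f x0) (hf _) (fun y hy => htop x0 hx0 y hy)
    refine h2.trans ?_
    have h4 : q * f x0 ≤ ∑ i ∈ T, f i := by
      rw [← hTc, ← nsmul_eq_mul]
      exact Finset.card_nsmul_le_sum _ _ _ hmin
    have h5 : Real.sqrt q * f x0 ≤ (∑ i ∈ T, f i) / Real.sqrt q := by
      rw [le_div_iff₀ hs0]
      calc Real.sqrt q * f x0 * Real.sqrt q = (Real.sqrt q * Real.sqrt q) * f x0 := by ring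
        _ = q * f x0 := by rw [hss]
        _ ≤ _ := h4
    have h6 : ∑ i ∈ R, f i = ∑ i ∈ R \ T, f i + ∑ i ∈ T, f i := (Finset.sum_sdiff hT).symm
    rw [h6, add_div]
    refine mul_le_mul_of_nonneg_left ?_ hτ
    linarith

lemma sum_S_le {p r : ℕ} (S : Finset (Fin p)) (s : ℕ) (hS : S.card ≤ s)
    (D : Matrix (Fin p) (Fin r) ℝ) :
    ∑ i ∈ S, l2norm (D i) ≤ Real.sqrt s * frobNorm (mask S D) := by
  have h := Real.sum_mul_le_sqrt_mul_sqrt S (fun _ => (1:ℝ)) (fun i => l2norm (D i))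
  simp only [one_mul] at h
  rw [← mask_fr, Real.sqrt_sq (fr_nonneg _)] at h
  refine h.trans ?_
  have := fr_nonneg (mask S D)
  gcongr
  simpa using hS

lemma restricted_eig {n p r : ℕ} (X : Matrix (Fin n) (Fin p) ℝ) (a b cstar : ℝ) (s k : ℕ)
    (ha : 0 < a) (hb : 0 < b) (hc : 0 < cstar) (hs : 1 ≤ s) (hk : k ≤ p) (hsk : 2 * s ≤ k)
    (hkm : kappaMinusSq X k = a ^ 2) (hkp : kappaPlusSq X k = b ^ 2)
    (h6 : 6 * cstar ≤ Real.sqrt ((k : ℝ) / (s : ℝ) - 1))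
    (hcs : (kappaPlusSq X k - kappaMinusSq X (2 * k)) / kappaMinusSq X k < cstar)
    (S : Finset (Fin p)) (hS : S.card ≤ s) (D : Matrix (Fin p) (Fin r) ℝ)
    (hcone : ∑ i ∈ Sᶜ, l2norm (D i) ≤ 3 * ∑ i ∈ S, l2norm (D i)) :
    a ^ 2 / 2 * frobNorm (mask S D) ≤ b * frobNorm (X * D) := by
  set q := k - s with hq
  have hq1 : 1 ≤ q := by omega
  have hqr : (q : ℝ) = k - s := by rw [hq, Nat.cast_sub (by omega)]
  have hq0 : (0 : ℝ) < q := by exact_mod_cast hq1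
  have hs0 : (0 : ℝ) < s := by exact_mod_cast hs
  have hsq0 : 0 < Real.sqrt q := Real.sqrt_pos.2 hq0
  have hss0 : 0 < Real.sqrt s := Real.sqrt_pos.2 hs0
  set τ := cstar * a ^ 2 with hτ
  have hτ0 : 0 ≤ τ := by positivity
  have hτle : kappaPlusSq X k - kappaMinusSq X (2 * k) ≤ τ := by
    rw [hkm, div_lt_iff₀ (by positivity)] at hcs
    exact hcs.le
  obtain ⟨T, hT, hTc, hblock⟩ := block (fun i => l2norm (D i)) (fun i => l2_nonneg _) q hq1 Sᶜ
  set T' := S ∪ T with hT'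
  have hdST : Disjoint S T := by
    rw [Finset.disjoint_left]; intro i hi hiT
    exact (Finset.mem_compl.1 (hT hiT)) hi
  have hT'c : T'.card ≤ k := (Finset.card_union_le _ _).trans (by omega)
  have hdis : ∀ B ⊆ Sᶜ \ T, Disjoint T' B := by
    intro B hB
    rw [Finset.disjoint_left]; intro i hi hiB
    have := hB hiB
    simp only [Finset.mem_sdiff, Finset.mem_compl] at this
    rcases Finset.mem_union.1 hi with h | h
    · exact this.1 h
    · exact this.2 h
  have hcross := hblock (fun B => |fdot (X * mask T' D) (X * mask B D)|) (τ * frobNorm (mask T' D))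
    (mul_nonneg hτ0 (fr_nonneg _))
    (by
      intro A B _ _ hAB
      beta_reduce
      rw [mask_union _ _ hAB, Matrix.mul_add, fdot_add_right]
      exact abs_add_le _ _)
    (by
      intro B hB hBc
      change |fdot (X * mask T' D) (X * mask B D)| ≤ _ * Real.sqrt (∑ i ∈ B, l2norm (D i) ^ 2)
      rw [← mask_fr, Real.sqrt_sq (fr_nonneg _)]
      exact cross_mat X k hk τ hτ0 hτle T' B hT'c (by omega) (hdis B hB) D)
  beta_reduce at hcross
  have hD : D = mask T' D + mask (Sᶜ \ T) D := by
    rw [← mask_union _ _ (hdis _ subset_rfl)]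
    have : T' ∪ (Sᶜ \ T) = Finset.univ := by
      ext i; simp [hT']; tauto
    rw [this, mask_univ]
  have hmono : frobNorm (mask S D) ≤ frobNorm (mask T' D) := by
    refine abs_le_of_sq_le_sq' ?_ (fr_nonneg _) |>.2
    rw [mask_fr, mask_fr]
    exact Finset.sum_le_sum_of_subset_of_nonneg Finset.subset_union_left (fun i _ _ => sq_nonneg _)
  set x := frobNorm (mask T' D) with hx
  have hx0 : 0 ≤ x := fr_nonneg _
  set y := frobNorm (X * mask T' D) with hy
  have hy0 : 0 ≤ y := fr_nonneg _
  have hR : ∑ i ∈ Sᶜ, l2norm (D i) ≤ 3 * (Real.sqrt s * x) := by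
    have := sum_S_le S s hS D
    have h2 : Real.sqrt s * frobNorm (mask S D) ≤ Real.sqrt s * x := by gcongr
    linarith
  have h6' : 6 * cstar * Real.sqrt s ≤ Real.sqrt q := by
    have e : (k : ℝ) / s - 1 = q / s := by rw [hqr]; field_simp
    rw [e, Real.sqrt_div hq0.le, le_div_iff₀ hss0] at h6
    exact h6
  have hc2 : |fdot (X * mask T' D) (X * mask (Sᶜ \ T) D)| ≤ a ^ 2 / 2 * x ^ 2 := by
    refine hcross.trans ?_
    calc τ * x * ((∑ i ∈ Sᶜ, l2norm (D i)) / Real.sqrt q)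
        ≤ τ * x * (3 * (Real.sqrt s * x) / Real.sqrt q) := by gcongr
      _ = (6 * cstar * Real.sqrt s) / Real.sqrt q * (a ^ 2 / 2 * x ^ 2) := by rw [hτ]; field_simp; ring
      _ ≤ 1 * (a ^ 2 / 2 * x ^ 2) := by
          gcongr
          rw [div_le_one hsq0]; exact h6'
      _ = _ := by ring
  have h1 : a ^ 2 * x ^ 2 ≤ y ^ 2 := by rw [← hkm]; exact kminus_mat X k T' hT'c D
  have h2 : y ≤ b * x := by
    refine abs_le_of_sq_le_sq' ?_ (by positivity) |>.2
    rw [mul_pow, ← hkp]; exact kplus_mat X k hk T' hT'c D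
  have h3 : fdot (X * mask T' D) (X * D) = y ^ 2 + fdot (X * mask T' D) (X * mask (Sᶜ \ T) D) := by
    rw [hy, fr_sq_fdot, ← fdot_add_right, ← Matrix.mul_add, ← hD]
  have h4 := fdot_le (X * mask T' D) (X * D)
  have h5 := (abs_le.1 hc2).1
  have hz0 := fr_nonneg (X * D)
  have h7 : y * frobNorm (X * D) ≤ b * x * frobNorm (X * D) := by gcongr
  have h8 : x * (a ^ 2 / 2 * x) ≤ x * (b * frobNorm (X * D)) := by nlinarith
  by_cases hx' : x = 0
  · have : frobNorm (mask S D) = 0 := le_antisymm (by linarith) (fr_nonneg _)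
    rw [this, mul_zero]; positivity
  · have hxp : 0 < x := lt_of_le_of_ne hx0 (Ne.symm hx')
    have := le_of_mul_le_mul_left h8 hxp
    calc _ ≤ a ^ 2 / 2 * x := by gcongr
      _ ≤ _ := this

/-- Oracle bound for the group Lasso. -/
lemma lasso_bound {n p r : ℕ} (X : Matrix (Fin n) (Fin p) ℝ) (a b cstar : ℝ) (s k : ℕ)
    (ha : 0 < a) (hb : 0 < b) (hc : 0 < cstar) (hs : 1 ≤ s) (hk : k ≤ p) (hsk : 2 * s ≤ k)
    (hkm : kappaMinusSq X k = a ^ 2) (hkp : kappaPlusSq X k = b ^ 2)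
    (h6 : 6 * cstar ≤ Real.sqrt ((k : ℝ) / (s : ℝ) - 1))
    (hcs : (kappaPlusSq X k - kappaMinusSq X (2 * k)) / kappaMinusSq X k < cstar)
    (S : Finset (Fin p)) (hS : S.card ≤ s) (Bs B1 : Matrix (Fin p) (Fin r) ℝ)
    (hBs : ∀ i, i ∉ S → Bs i = 0) (W : Matrix (Fin n) (Fin r) ℝ) (lam : ℝ) (hlam : 0 < lam)
    (hW : ∀ j, l2norm (Xᵀ j ᵥ* W) ≤ lam / 2)
    (hopt : frobNorm (X * Bs + W - X * B1) ^ 2 / 2 + lam * norm21 B1 ≤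
      frobNorm (X * Bs + W - X * Bs) ^ 2 / 2 + lam * norm21 Bs) :
    frobNorm (X * B1 - X * Bs) ≤ 6 * b / a ^ 2 * Real.sqrt s * lam := by
  set D := B1 - Bs with hD
  have hXD : X * B1 - X * Bs = X * D := by rw [hD, Matrix.mul_sub]
  rw [hXD]
  have e1 : X * Bs + W - X * B1 = W - X * D := by rw [← hXD]; abel
  have e2 : X * Bs + W - X * Bs = W := by abel
  rw [e1, e2] at hopt
  have e3 : frobNorm (W - X * D) ^ 2 = frobNorm W ^ 2 - 2 * fdot W (X * D) + frobNorm (X * D) ^ 2 := by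
    simp only [fr_sq, fdot, Matrix.sub_apply, Finset.mul_sum, ← Finset.sum_sub_distrib, ← Finset.sum_add_distrib]
    refine Finset.sum_congr rfl fun i _ => Finset.sum_congr rfl fun j _ => by ring
  have e4 : fdot W (X * D) ≤ lam / 2 * ∑ j, l2norm (D j) := by
    rw [fdot_mul, Finset.mul_sum]
    refine Finset.sum_le_sum fun j _ => ?_
    have h1 : (Xᵀ * W) j = Xᵀ j ᵥ* W := by
      ext l; simp [Matrix.mul_apply, Matrix.vecMul, dotProduct]
    have h2 := l2_dot ((Xᵀ * W) j) (D j)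
    have h3 : l2norm ((Xᵀ * W) j) * l2norm (D j) ≤ lam / 2 * l2norm (D j) := by
      have := l2_nonneg (D j)
      rw [h1]; gcongr; exact hW j
    exact h2.trans h3
  have split : ∀ g : Fin p → ℝ, ∑ i, g i = ∑ i ∈ S, g i + ∑ i ∈ Sᶜ, g i := fun g =>
    (Finset.sum_add_sum_compl S g).symm
  have e5 : norm21 Bs ≤ norm21 B1 + ∑ i ∈ S, l2norm (D i) - ∑ i ∈ Sᶜ, l2norm (D i) := by
    unfold norm21
    rw [split, split]
    have h1 : ∑ i ∈ Sᶜ, l2norm (Bs i) = 0 := Finset.sum_eq_zero fun i hi => by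
      rw [hBs i (Finset.mem_compl.1 hi)]; simp [l2norm]
    have h2 : ∑ i ∈ Sᶜ, l2norm (B1 i) = ∑ i ∈ Sᶜ, l2norm (D i) := Finset.sum_congr rfl fun i hi => by
      have : D i = B1 i - Bs i := rfl
      rw [this, hBs i (Finset.mem_compl.1 hi), sub_zero]
    have h3 : ∑ i ∈ S, l2norm (Bs i) ≤ ∑ i ∈ S, l2norm (B1 i) + ∑ i ∈ S, l2norm (D i) := by
      rw [← Finset.sum_add_distrib]
      refine Finset.sum_le_sum fun i _ => ?_
      have : Bs i = B1 i + -(D i) := by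
        have : D i = B1 i - Bs i := rfl
        rw [this]; abel
      rw [this]
      refine (l2_add _ _).trans ?_
      rw [l2_neg]
    linarith
  have e6 := split (fun j => l2norm (D j))
  rw [e6] at e4
  set P := ∑ i ∈ S, l2norm (D i) with hP
  set Q := ∑ i ∈ Sᶜ, l2norm (D i) with hQ
  have e7 : lam * norm21 Bs ≤ lam * (norm21 B1 + P - Q) := by gcongr
  have hmain : frobNorm (X * D) ^ 2 ≤ lam * (3 * P - Q) := by rw [e3] at hopt; nlinarith
  have hcone : Q ≤ 3 * P := by
    have : 0 ≤ lam * (3 * P - Q) := (sq_nonneg _).trans hmain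
    have := nonneg_of_mul_nonneg_right this hlam
    linarith
  have hre := restricted_eig X a b cstar s k ha hb hc hs hk hsk hkm hkp h6 hcs S hS D hcone
  have hP' := sum_S_le S s hS D
  have hQ0 : 0 ≤ Q := Finset.sum_nonneg fun i _ => l2_nonneg _
  set x := frobNorm (X * D) with hx
  have hx0 : 0 ≤ x := fr_nonneg _
  have h1 : frobNorm (mask S D) ≤ 2 * b / a ^ 2 * x := by
    rw [div_mul_eq_mul_div, le_div_iff₀ (by positivity)]
    nlinarith
  have h2 : x ^ 2 ≤ lam * (3 * (Real.sqrt s * (2 * b / a ^ 2 * x))) := by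
    refine hmain.trans ?_
    gcongr
    have : Real.sqrt s * frobNorm (mask S D) ≤ Real.sqrt s * (2 * b / a ^ 2 * x) := by gcongr
    linarith
  by_cases hx' : x = 0
  · rw [hx']; positivity
  · have hxp : 0 < x := lt_of_le_of_ne hx0 (Ne.symm hx')
    refine le_of_mul_le_mul_left ?_ hxp
    calc x * x = x ^ 2 := by ring
      _ ≤ _ := h2
      _ = _ := by ring

section SinTheta
variable {I J : Type*} [Fintype I] [Fintype J]

lemma exists_unit {V : Submodule ℝ (J → ℝ)} (h : 1 ≤ Module.finrank ℝ V) :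
    ∃ v ∈ V, l2norm v = 1 := by
  have hV : V ≠ ⊥ := by
    rintro rfl; simp at h
  obtain ⟨v, hv, h0⟩ := Submodule.exists_mem_ne_zero_of_ne_bot hV
  refine ⟨(l2norm v)⁻¹ • v, V.smul_mem _ hv, ?_⟩
  have := l2_pos h0
  rw [l2_smul, abs_of_pos (by positivity), inv_mul_cancel₀ this.ne']

lemma sv_ge (M : Matrix I J ℝ) (j : ℕ) (hj : 1 ≤ j) (V : Submodule ℝ (J → ℝ))
    (hV : Module.finrank ℝ V = j) (c : ℝ) (hc : ∀ v ∈ V, c * l2norm v ≤ l2norm (M *ᵥ v)) :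
    c ≤ singularValue M j := by
  unfold singularValue
  refine le_csSup_of_le ⟨frobNorm M, ?_⟩ ⟨V, hV, rfl⟩ ?_
  · rintro t ⟨V', hV', rfl⟩
    obtain ⟨v, hv, h1⟩ := exists_unit (V := V') (by omega)
    have h2 : sInf { u | ∃ v ∈ V', l2norm v = 1 ∧ u = l2norm (M.mulVec v) } ≤ l2norm (M *ᵥ v) := by
      refine csInf_le ⟨0, ?_⟩ ⟨v, hv, h1, rfl⟩
      rintro u ⟨w, _, _, rfl⟩; exact l2_nonneg _
    refine h2.trans ?_
    have := l2_mulVec_le M v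
    rwa [h1, mul_one] at this
  · obtain ⟨v, hv, h1⟩ := exists_unit (V := V) (by omega)
    refine le_csInf ⟨_, v, hv, h1, rfl⟩ ?_
    rintro u ⟨w, hw, h1, rfl⟩
    have := hc w hw
    rwa [h1, mul_one] at this

lemma sv_exists (M : Matrix I J ℝ) (j : ℕ) (d : ℝ) (hd : 0 < d) (h : d < singularValue M j) :
    ∃ V : Submodule ℝ (J → ℝ), Module.finrank ℝ V = j ∧
      ∀ v ∈ V, d * l2norm v ≤ l2norm (M *ᵥ v) := by
  unfold singularValue at h
  have hne : { t | ∃ V : Submodule ℝ (J → ℝ), Module.finrank ℝ V = j ∧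
    t = sInf { u | ∃ v ∈ V, l2norm v = 1 ∧ u = l2norm (M.mulVec v) } }.Nonempty := by
    by_contra hne
    rw [Set.not_nonempty_iff_eq_empty] at hne
    rw [hne, Real.sSup_empty] at h
    linarith
  obtain ⟨t, ⟨V, hV, rfl⟩, ht⟩ := exists_lt_of_lt_csSup hne h
  refine ⟨V, hV, fun v hv => ?_⟩
  by_cases h0 : v = 0
  · subst h0; simp [l2norm]
  have hp := l2_pos h0
  have h1 : sInf { u | ∃ v ∈ V, l2norm v = 1 ∧ u = l2norm (M.mulVec v) } ≤
      l2norm (M *ᵥ ((l2norm v)⁻¹ • v)) := by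
    refine csInf_le ⟨0, ?_⟩ ⟨_, V.smul_mem _ hv, ?_, rfl⟩
    · rintro u ⟨w, _, _, rfl⟩; exact l2_nonneg _
    · rw [l2_smul, abs_of_pos (by positivity), inv_mul_cancel₀ hp.ne']
  rw [Matrix.mulVec_smul, l2_smul, abs_of_pos (by positivity)] at h1
  have h2 := ht.le.trans h1
  rw [inv_mul_eq_div, le_div_iff₀ hp] at h2
  exact h2

lemma sv_pos (M : Matrix I J ℝ) (j : ℕ) (hj : 1 ≤ j) (hr : j ≤ M.rank) :
    0 < singularValue M j := by
  classical
  let b := Module.finBasis ℝ (LinearMap.range M.mulVecLin)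
  have hb : ∀ i, ∃ w : J → ℝ, M.mulVecLin w = (b i : I → ℝ) := fun i => (b i).2
  choose w hw using hb
  let e : Fin j → Fin (Module.finrank ℝ (LinearMap.range M.mulVecLin)) := Fin.castLE hr
  let f : (Fin j → ℝ) →ₗ[ℝ] (J → ℝ) := Fintype.linearCombination ℝ (fun i => w (e i))
  have hli : LinearIndependent ℝ (fun i => (b (e i) : I → ℝ)) := by
    have h1 := b.linearIndependent.map' (LinearMap.range M.mulVecLin).subtype (Submodule.ker_subtype _)
    exact h1.comp e (Fin.castLE_injective hr)
  have hinj : Function.Injective (M.mulVecLin ∘ₗ f) := by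
    have h1 : M.mulVecLin ∘ₗ f = Fintype.linearCombination ℝ (fun i => (b (e i) : I → ℝ)) := by
      ext i : 2
      simp only [f, LinearMap.comp_apply, LinearMap.single_apply,
        Fintype.linearCombination_apply_single, map_smul, hw]
    rw [h1]
    exact (linearIndependent_iff_injective_fintypeLinearCombination).1 hli
  have hfinj : Function.Injective f := fun x y h => hinj (by simp [h])
  obtain ⟨g, hg⟩ := LinearMap.exists_leftInverse_of_injective (M.mulVecLin ∘ₗ f)
    (LinearMap.ker_eq_bot.2 hinj)
  let N := LinearMap.toMatrix' (f ∘ₗ g)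
  have hN := fr_nonneg N
  have := sv_ge M j hj (LinearMap.range f)
    (by rw [LinearMap.finrank_range_of_inj hfinj]; simp) (1 / (frobNorm N + 1)) (by
      rintro v ⟨x, rfl⟩
      have h1 : f x = N *ᵥ (M *ᵥ (f x)) := by
        have h2 := LinearMap.congr_fun hg x
        simp only [LinearMap.comp_apply, LinearMap.id_apply, Matrix.mulVecLin_apply] at h2
        have h3 : N *ᵥ (M *ᵥ (f x)) = (f ∘ₗ g) (M *ᵥ (f x)) := by
          simp only [N, ← Matrix.toLin'_apply, Matrix.toLin'_toMatrix']
        rw [h3, LinearMap.comp_apply, h2]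
      have h2 := l2_mulVec_le N (M *ᵥ (f x))
      rw [← h1] at h2
      have h4 := l2_nonneg (M *ᵥ (f x))
      rw [one_div, inv_mul_eq_div, div_le_iff₀ (by positivity)]
      nlinarith)
  refine lt_of_lt_of_le ?_ this
  positivity

lemma sv_col_range {r : ℕ} (M : Matrix I J ℝ) (V : Matrix J (Fin r) ℝ)
    (hV : IsRightSingularVectors M V) (j : Fin r) (hj : j.1 + 1 ≤ M.rank) :
    (fun i => V i j) ∈ LinearMap.range Mᵀ.mulVecLin := by
  have h := sv_pos M (j.1 + 1) (by omega) hj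
  refine ⟨((singularValue M (j.1 + 1)) ^ 2)⁻¹ • (M *ᵥ fun i => V i j), ?_⟩
  rw [map_smul, Matrix.mulVecLin_apply, Matrix.mulVec_mulVec, hV.2 j, smul_smul,
    inv_mul_cancel₀ (by positivity), one_smul]

lemma orth_li {r : ℕ} (V : Matrix J (Fin r) ℝ) (hV : Vᵀ * V = 1) :
    LinearIndependent ℝ (fun j : Fin r => (fun i => V i j : J → ℝ)) := by
  rw [linearIndependent_iff_injective_fintypeLinearCombination]
  have h1 : ∀ x, Fintype.linearCombination ℝ (fun j : Fin r => (fun i => V i j : J → ℝ)) x = V *ᵥ x := by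
    intro x; ext i
    simp [Fintype.linearCombination_apply, Matrix.mulVec, dotProduct, mul_comm]
  intro x y h
  rw [h1, h1] at h
  have := congrArg (fun z => Vᵀ *ᵥ z) h
  simpa [Matrix.mulVec_mulVec, hV] using this

lemma sv_proj {r : ℕ} (M : Matrix I J ℝ) (V : Matrix J (Fin r) ℝ)
    (hV : IsRightSingularVectors M V) (hr : M.rank ≤ r) : V * Vᵀ * Mᵀ = Mᵀ := by
  classical
  let e : Fin M.rank → Fin r := Fin.castLE hr
  let c : Fin M.rank → (J → ℝ) := fun j i => V i (e j)
  have hli : LinearIndependent ℝ c := (orth_li V hV.1).comp e (Fin.castLE_injective hr)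
  have hle : Submodule.span ℝ (Set.range c) ≤ LinearMap.range Mᵀ.mulVecLin := by
    rw [Submodule.span_le]
    rintro _ ⟨j, rfl⟩
    exact sv_col_range M V hV (e j) (by have := j.2; simp [e])
  have heq : Submodule.span ℝ (Set.range c) = LinearMap.range Mᵀ.mulVecLin := by
    refine Submodule.eq_of_le_of_finrank_le hle ?_
    rw [finrank_span_eq_card hli, Fintype.card_fin]
    exact (Matrix.rank_transpose M).le
  have hfix : ∀ w ∈ Submodule.span ℝ (Set.range c), (V * Vᵀ) *ᵥ w = w := by
    intro w hw
    induction hw using Submodule.span_induction with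
    | mem x hx =>
      obtain ⟨j, rfl⟩ := hx
      have h1 : c j = V *ᵥ (Pi.single (e j) 1) := by
        ext i; simp [c]
      rw [h1, Matrix.mulVec_mulVec, Matrix.mul_assoc, hV.1, Matrix.mul_one]
    | zero => simp
    | add x y _ _ hx hy => rw [Matrix.mulVec_add, hx, hy]
    | smul a x _ hx => rw [Matrix.mulVec_smul, hx]
  refine Matrix.toLin'.injective (LinearMap.ext fun x => ?_)
  rw [Matrix.toLin'_apply, Matrix.toLin'_apply, ← Matrix.mulVec_mulVec]
  exact hfix _ (heq ▸ ⟨x, rfl⟩)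

lemma dual_lower (N : Matrix I J ℝ) (w : I → ℝ) (x : J → ℝ) (hw : w = N *ᵥ x) (c : ℝ) (hc : 0 < c)
    (h : c * l2norm x ≤ l2norm w) : c * l2norm w ≤ l2norm (Nᵀ *ᵥ w) := by
  by_cases h0 : w = 0
  · subst h0; simp [l2norm]
  have hp := l2_pos h0
  have h1 : l2norm w ^ 2 ≤ l2norm (Nᵀ *ᵥ w) * l2norm x := by
    rw [l2_sq_dot]
    have : w ⬝ᵥ w = (Nᵀ *ᵥ w) ⬝ᵥ x := by
      conv_lhs => rw [hw]
      rw [Matrix.dotProduct_mulVec, ← hw, Matrix.mulVec_transpose]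
    rw [this]
    exact l2_dot _ _
  have h2 := l2_nonneg (Nᵀ *ᵥ w)
  refine le_of_mul_le_mul_left ?_ hp
  nlinarith

lemma l2_orth {r : ℕ} (V : Matrix J (Fin r) ℝ) (hV : Vᵀ * V = 1) (w : Fin r → ℝ) :
    l2norm (V *ᵥ w) = l2norm w := by
  have : l2norm (V *ᵥ w) ^ 2 = l2norm w ^ 2 := by
    rw [l2_sq_dot, l2_sq_dot, Matrix.dotProduct_mulVec, ← Matrix.mulVec_transpose,
      Matrix.mulVec_mulVec, hV, Matrix.one_mulVec]
  exact (pow_left_inj₀ (l2_nonneg _) (l2_nonneg _) two_ne_zero).1 this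

lemma sq_lower {r : ℕ} (N : Matrix (Fin r) (Fin r) ℝ) (c : ℝ) (hc : 0 < c)
    (h : ∀ x, c * l2norm x ≤ l2norm (N *ᵥ x)) (w : Fin r → ℝ) :
    c * l2norm w ≤ l2norm (Nᵀ *ᵥ w) := by
  have hinj : Function.Injective N.mulVecLin := by
    rw [← LinearMap.ker_eq_bot, LinearMap.ker_eq_bot']
    intro x hx
    have h1 := h x
    rw [← Matrix.mulVecLin_apply, hx] at h1
    by_contra h0
    have := l2_pos h0
    have h2 : l2norm (0 : Fin r → ℝ) = 0 := l2_eq_zero.2 rfl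
    rw [h2] at h1
    nlinarith
  obtain ⟨x, hx⟩ := (LinearMap.injective_iff_surjective.1 hinj) w
  rw [Matrix.mulVecLin_apply] at hx
  exact dual_lower N w x hx.symm c hc (hx ▸ h x)

lemma fr_proj_sq {r k : ℕ} (W : Matrix I (Fin r) ℝ) (hW : Wᵀ * W = 1) (M : Matrix I (Fin k) ℝ)  :
    frobNorm (M - W * (Wᵀ * M)) ^ 2 = frobNorm M ^ 2 - frobNorm (Wᵀ * M) ^ 2 := by
  have h : ∀ T : Matrix (Fin r) (Fin k) ℝ, Wᵀ * (W * T) = T := fun T => by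
    rw [← Matrix.mul_assoc, hW, Matrix.one_mul]
  simp only [fr_sq_fdot, fdot_trace, Matrix.transpose_sub, Matrix.transpose_mul,
    Matrix.transpose_transpose, Matrix.sub_mul, Matrix.mul_sub, Matrix.trace_sub, Matrix.mul_assoc, h]
  ring

lemma sin_theta {n m r : ℕ} (T : Matrix (Fin n) (Fin m) ℝ) (G : Matrix (Fin n) (Fin r) ℝ)
    (U U1 : Matrix (Fin n) (Fin r) ℝ) (V V0 : Matrix (Fin m) (Fin r) ℝ) (c e : ℝ)
    (hc : 0 < c) (he : 0 < e) (Vs : Submodule ℝ (Fin m → ℝ)) (hVs : Module.finrank ℝ Vs = r)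
    (hlow : ∀ v ∈ Vs, e * l2norm v ≤ l2norm (T *ᵥ v)) (hrank : T.rank ≤ r)
    (hU : IsLeftSingularVectors T U) (hV : IsRightSingularVectors T V)
    (hc0 : ∀ x, c * l2norm x ≤ l2norm ((Vᵀ * V0) *ᵥ x))
    (hU1 : IsLeftSingularVectors G U1) :
    (c * e) ^ 2 * frobNorm (U1 * U1ᵀ - U * Uᵀ) ^ 2 ≤ 2 * frobNorm (G - T * V0) ^ 2 := by
  have hUo : Uᵀ * U = 1 := hU.1
  have hU1o : U1ᵀ * U1 = 1 := hU1.1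
  -- range of T
  have hinj : Function.Injective (T.mulVecLin.domRestrict Vs) := by
    rw [← LinearMap.ker_eq_bot, LinearMap.ker_eq_bot']
    intro x hx
    have h1 := hlow x x.2
    have hx' : T *ᵥ (x : Fin m → ℝ) = 0 := hx
    rw [hx'] at h1
    have h2 : l2norm (0 : Fin n → ℝ) = 0 := l2_eq_zero.2 rfl
    rw [h2] at h1
    by_contra h0
    have h3 : (x : Fin m → ℝ) ≠ 0 := fun h => h0 (Subtype.ext h)
    have := l2_pos h3
    nlinarith
  have hRle : LinearMap.range (T.mulVecLin.domRestrict Vs) ≤ LinearMap.range T.mulVecLin := by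
    rintro _ ⟨x, rfl⟩; exact ⟨x, rfl⟩
  have hRf : Module.finrank ℝ (LinearMap.range (T.mulVecLin.domRestrict Vs)) = r := by
    rw [LinearMap.finrank_range_of_inj hinj, hVs]
  have hReq := Submodule.eq_of_le_of_finrank_le hRle (by rw [hRf]; exact hrank)
  have hrk : T.rank = r := by
    unfold Matrix.rank; rw [← hReq, hRf]
  have hrkT : Tᵀ.rank = r := by rw [Matrix.rank_transpose, hrk]
  have hUT : U * Uᵀ * T = T := by
    have := sv_proj Tᵀ U hU hrkT.le
    rwa [Matrix.transpose_transpose] at this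
  have hVT : V * Vᵀ * Tᵀ = Tᵀ := sv_proj T V hV hrk.le
  have hGG : U1 * U1ᵀ * G = G := by
    have := sv_proj Gᵀ U1 hU1 (by
      rw [Matrix.rank_transpose]; simpa using Matrix.rank_le_width G)
    rwa [Matrix.transpose_transpose] at this
  have hURange : ∀ y, U *ᵥ y ∈ LinearMap.range T.mulVecLin := by
    intro y
    have h1 : U *ᵥ y = ∑ j, y j • (fun i => U i j) := by
      ext i; simp [Matrix.mulVec, dotProduct, mul_comm]
    rw [h1]
    refine Submodule.sum_mem _ fun j _ => Submodule.smul_mem _ _ ?_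
    have := sv_col_range Tᵀ U hU j (by have := j.2; omega)
    rwa [Matrix.transpose_transpose] at this
  have hlower : ∀ y, c * e * l2norm y ≤ l2norm ((V0ᵀ * Tᵀ * U) *ᵥ y) := by
    intro y
    have h1 := hURange y
    rw [← hReq] at h1
    obtain ⟨v, hv⟩ := h1
    have hv' : U *ᵥ y = T *ᵥ (v : Fin m → ℝ) := hv.symm
    have h2 := dual_lower T (U *ᵥ y) v hv' e he (by rw [hv']; exact hlow v v.2)
    rw [l2_orth U hUo] at h2
    set w := Vᵀ *ᵥ (Tᵀ *ᵥ (U *ᵥ y)) with hw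
    have h3 : V *ᵥ w = Tᵀ *ᵥ (U *ᵥ y) := by
      rw [hw, Matrix.mulVec_mulVec, Matrix.mulVec_mulVec, hVT]
    have h4 := sq_lower (Vᵀ * V0) c hc hc0 w
    rw [Matrix.transpose_mul, Matrix.transpose_transpose, ← Matrix.mulVec_mulVec, h3,
      Matrix.mulVec_mulVec, Matrix.mulVec_mulVec] at h4
    rw [← h3, l2_orth V hV.1] at h2
    calc c * e * l2norm y = c * (e * l2norm y) := by ring
      _ ≤ c * l2norm w := by gcongr
      _ ≤ _ := h4
  set E := U - U1 * (U1ᵀ * U) with hE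
  have hEN : E * (Uᵀ * T * V0) = (T * V0 - G) - U1 * (U1ᵀ * (T * V0 - G)) := by
    have h1 : U1 * (U1ᵀ * (T * V0 - G)) = U1 * (U1ᵀ * (T * V0)) - G := by
      rw [Matrix.mul_sub, Matrix.mul_sub, ← Matrix.mul_assoc U1 U1ᵀ G, hGG]
    have h2 : U * (Uᵀ * T * V0) = T * V0 := by
      rw [← Matrix.mul_assoc, ← Matrix.mul_assoc, hUT]
    rw [h1, hE, Matrix.sub_mul, h2, Matrix.mul_assoc U1, Matrix.mul_assoc U1ᵀ, h2]
    abel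
  have hrows : (c * e) ^ 2 * frobNorm E ^ 2 ≤ frobNorm (E * (Uᵀ * T * V0)) ^ 2 := by
    rw [fr_sq_rows, fr_sq_rows, Finset.mul_sum]
    refine Finset.sum_le_sum fun i _ => ?_
    have h1 : (E * (Uᵀ * T * V0)) i = (V0ᵀ * Tᵀ * U) *ᵥ (E i) := by
      have : V0ᵀ * Tᵀ * U = (Uᵀ * T * V0)ᵀ := by
        simp [Matrix.transpose_mul, Matrix.mul_assoc]
      rw [this, Matrix.mulVec_transpose]
      rfl
    rw [h1, ← mul_pow]
    have := l2_nonneg (E i)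
    have := hlower (E i)
    gcongr
  have hcontr : frobNorm (E * (Uᵀ * T * V0)) ^ 2 ≤ frobNorm (G - T * V0) ^ 2 := by
    rw [hEN, fr_proj_sq U1 hU1o]
    have h1 : frobNorm (T * V0 - G) ^ 2 = frobNorm (G - T * V0) ^ 2 := by
      rw [fr_sq, fr_sq]
      refine Finset.sum_congr rfl fun i _ => Finset.sum_congr rfl fun j _ => ?_
      simp only [Matrix.sub_apply]; ring
    have := sq_nonneg (frobNorm (U1ᵀ * (T * V0 - G)))
    linarith
  have hnorm : frobNorm (U1 * U1ᵀ - U * Uᵀ) ^ 2 = 2 * frobNorm E ^ 2 := by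
    rw [hE, fr_proj_sq U1 hU1o]
    have hA : ∀ S : Matrix (Fin r) (Fin n) ℝ, U1ᵀ * (U1 * S) = S := fun S => by
      rw [← Matrix.mul_assoc, hU1o, Matrix.one_mul]
    have hB : ∀ S : Matrix (Fin r) (Fin n) ℝ, Uᵀ * (U * S) = S := fun S => by
      rw [← Matrix.mul_assoc, hUo, Matrix.one_mul]
    have t1 : (U1 * U1ᵀ).trace = r := by rw [Matrix.trace_mul_comm, hU1o]; simp
    have t2 : (U * Uᵀ).trace = r := by rw [Matrix.trace_mul_comm, hUo]; simp
    have t3 : (U * (Uᵀ * (U1 * U1ᵀ))).trace = (Uᵀ * (U1 * (U1ᵀ * U))).trace := by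
      rw [Matrix.trace_mul_comm]; simp only [Matrix.mul_assoc]
    have t4 : (U1 * (U1ᵀ * (U * Uᵀ))).trace = (Uᵀ * (U1 * (U1ᵀ * U))).trace := by
      rw [← Matrix.mul_assoc, ← Matrix.mul_assoc, Matrix.trace_mul_comm]; simp only [Matrix.mul_assoc]
    simp only [fr_sq_fdot, fdot_trace, Matrix.transpose_sub, Matrix.transpose_mul,
      Matrix.transpose_transpose, Matrix.sub_mul, Matrix.mul_sub, Matrix.trace_sub,
      Matrix.mul_assoc, hA, hB, t1, t2, t3, t4, hUo, Matrix.trace_one, Fintype.card_fin]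
    ring
  rw [hnorm]
  linarith [hrows.trans hcontr]

end SinTheta


/-- Accuracy of U_{(1)}. Under the conditions of the SARRS upper bound theorem,
there is a constant C depending only on κ₋(s_*) = a, κ₊(s_*) = b, c_* and c₀ such that with
probability at least 1 − 1/p, ‖U_{(1)}U_{(1)}' − UU'‖_F ≤ C √s λ / d. -/
theorem stmt7 :
    ∀ a b cstar c0 : ℝ, 0 < a → 0 < c0 → 0 < cstar →
    ∃ C : ℝ, 0 < C ∧
    ∀ (n m p s r sstar : ℕ) (d γ σ lam K : ℝ)
      (X : Matrix (Fin n) (Fin p) ℝ) (A : Matrix (Fin p) (Fin m) ℝ)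
      (U : Matrix (Fin n) (Fin r) ℝ) (V V0 : Matrix (Fin m) (Fin r) ℝ)
      (B1 : Matrix (Fin n) (Fin m) ℝ → Matrix (Fin p) (Fin r) ℝ)
      (U1 : Matrix (Fin n) (Fin m) ℝ → Matrix (Fin n) (Fin r) ℝ),
      1 ≤ r → r ≤ s → 1 ≤ γ →
      memTheta A s r d γ →
      0 < σ →
      (∀ j : Fin p,
        4 * σ * l2norm (Xᵀ j) * (Real.sqrt r + Real.sqrt (4 * Real.log p)) ≤ lam) →
      1 < K → K⁻¹ ≤ kappaMinus X sstar → kappaMinus X sstar ≤ kappaPlus X sstar →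
      kappaPlus X sstar ≤ K →
      kappaMinus X sstar = a → kappaPlus X sstar = b →
      2 * s ≤ sstar →
      6 * cstar ≤ Real.sqrt ((sstar : ℝ) / (s : ℝ) - 1) →
      (kappaPlusSq X sstar - kappaMinusSq X (2 * sstar)) / kappaMinusSq X sstar < cstar →
      IsLeftSingularVectors (X * A) U →
      IsRightSingularVectors (X * A) V →
      V0ᵀ * V0 = 1 →
      c0 ≤ singularValue (Vᵀ * V0) r →
      -- step 1: group Lasso with response Y_{(1)} V_{(0)}, where Y_{(1)} = XA + Z_{(1)}
      (∀ z1 : Matrix (Fin n) (Fin m) ℝ, ∀ B' : Matrix (Fin p) (Fin r) ℝ,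
        frobNorm ((X * A + z1) * V0 - X * B1 z1) ^ 2 / 2 + lam * norm21 (B1 z1) ≤
          frobNorm ((X * A + z1) * V0 - X * B') ^ 2 / 2 + lam * norm21 B') →
      -- step 2: U_{(1)} collects the top-r left singular vectors of X B_{(1)}
      (∀ z1 : Matrix (Fin n) (Fin m) ℝ, IsLeftSingularVectors (X * B1 z1) (U1 z1)) →
      ENNReal.ofReal (1 - 1 / (p : ℝ)) ≤
        gaussianMatrix n m (Real.toNNReal ((2 * σ) ^ 2))
          {z | frobNorm (U1 z * (U1 z)ᵀ - U * Uᵀ) ≤ C * Real.sqrt s * lam / d} := by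
  intro a b cstar c0 ha hc0 hcstar
  refine ⟨2 * Real.sqrt 2 * 6 * (|b| + 1) / (a ^ 3 * c0), by positivity, ?_⟩
  intro n m p s r sstar d γ σ lam K X A U V V0 B1 U1 hr hrs hγ hA hσ hlam hK hKm hmp hpK hma hpb
    hss h6 hcs hU hV hV0 hsv hB1 hU1
  obtain ⟨hArank, hd, -, hAd, hAs⟩ := hA
  have hkm0 : 0 < kappaMinusSq X sstar := by
    rw [← Real.sqrt_pos]; change 0 < kappaMinus X sstar; rw [hma]; exact ha
  have hkm : kappaMinusSq X sstar = a ^ 2 := by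
    rw [← hma, kappaMinus, Real.sq_sqrt hkm0.le]
  have hb : 0 < b := by rw [← hpb]; refine lt_of_lt_of_le ?_ hmp; rw [hma]; exact ha
  have hkp0 : 0 < kappaPlusSq X sstar := by
    rw [← Real.sqrt_pos]; change 0 < kappaPlus X sstar; rw [hpb]; exact hb
  have hkp : kappaPlusSq X sstar = b ^ 2 := by
    rw [← hpb, kappaPlus, Real.sq_sqrt hkp0.le]
  have hsp : sstar ≤ p := kappa_le_p X sstar hkm0
  have hp : 1 ≤ p := by omega
  have hlam0 : 0 < lam := by
    let j : Fin p := ⟨0, hp⟩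
    have h1 := kminus_le X sstar (Pi.single j 1) {j} (by simp; omega)
      (fun i hi => by
        have : i ≠ j := by simpa using hi
        simp [this])
    have h2 : X *ᵥ (Pi.single j 1) = Xᵀ j := by
      ext i; simp
    have h3 : l2norm (Pi.single j (1 : ℝ) : Fin p → ℝ) ^ 2 = 1 := by
      rw [l2_sq_dot]; simp
    rw [h2, h3, mul_one] at h1
    have h4 : 0 < l2norm (Xᵀ j) := by
      by_contra h
      have h5 : l2norm (Xᵀ j) = 0 := le_antisymm (not_lt.1 h) (l2_nonneg _)
      rw [h5] at h1
      norm_num at h1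
      linarith
    have h5 : 0 < Real.sqrt r := Real.sqrt_pos.2 (by exact_mod_cast hr)
    refine lt_of_lt_of_le ?_ (hlam j)
    positivity
  refine good_event hr hp X V0 hV0 σ lam hσ hlam _ ?_
  intro z hz
  have hrow : ∀ i, i ∉ rowSupport A → A i = 0 := by
    intro i hi
    by_contra h
    exact hi (by simp [rowSupport, h])
  have hlasso := lasso_bound X a b cstar s sstar ha hb hcstar (by omega) hsp hss hkm hkp h6 hcs
    (rowSupport A) hAs (A * V0) (B1 z)
    (fun i hi => by
      ext l
      simp [Matrix.mul_apply, hrow i hi])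
    (z * V0) lam hlam0 hz (by
      have h := hB1 z (A * V0)
      rw [Matrix.add_mul, Matrix.mul_assoc X A V0] at h
      exact h)
  obtain ⟨Vs, hVs, hlow⟩ := sv_exists A r d hd hAd
  have hlow' : ∀ v ∈ Vs, (a * d) * l2norm v ≤ l2norm ((X * A) *ᵥ v) := by
    intro v hv
    rw [← Matrix.mulVec_mulVec]
    have h1 := kminus_le X sstar (A *ᵥ v) (rowSupport A) (by omega) (fun i hi => by
      simp [Matrix.mulVec, hrow i hi])
    rw [hkm, ← mul_pow] at h1
    have h2 := abs_le_of_sq_le_sq' h1 (l2_nonneg _) |>.2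
    calc (a * d) * l2norm v = a * (d * l2norm v) := by ring
      _ ≤ a * l2norm (A *ᵥ v) := by gcongr; exact hlow v hv
      _ ≤ _ := h2
  have hc : ∀ x, (c0 / 2) * l2norm x ≤ l2norm ((Vᵀ * V0) *ᵥ x) := by
    obtain ⟨W, hW, hWl⟩ := sv_exists (Vᵀ * V0) r (c0 / 2) (by positivity) (by linarith)
    have hWt : W = ⊤ := Submodule.eq_top_of_finrank_eq (by rw [hW]; simp)
    intro x
    exact hWl x (by rw [hWt]; trivial)
  have hst := sin_theta (X * A) (X * B1 z) U (U1 z) V V0 (c0 / 2) (a * d) (by positivity)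
    (by positivity) Vs hVs hlow'
    ((Matrix.rank_mul_le_right X A).trans hArank.le) hU hV hc (hU1 z)
  rw [Matrix.mul_assoc X A V0] at hst
  change frobNorm (U1 z * (U1 z)ᵀ - U * Uᵀ) ≤ _
  set F := frobNorm (U1 z * (U1 z)ᵀ - U * Uᵀ) with hF
  set D := frobNorm (X * B1 z - X * (A * V0)) with hD
  have hD0 : 0 ≤ D := fr_nonneg _
  have h2 : (c0 / 2 * (a * d) * F) ^ 2 ≤ (Real.sqrt 2 * D) ^ 2 := by
    rw [mul_pow, mul_pow (Real.sqrt 2), Real.sq_sqrt (by norm_num)]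
    exact hst
  have h3 := abs_le_of_sq_le_sq' h2 (by positivity) |>.2
  have hs0 := Real.sqrt_nonneg (s : ℝ)
  have h4 : D ≤ 6 * (|b| + 1) / a ^ 2 * Real.sqrt s * lam := by
    refine hlasso.trans ?_
    have : b ≤ |b| + 1 := by linarith [le_abs_self b]
    gcongr
  have h5 : F ≤ Real.sqrt 2 * D / (c0 / 2 * (a * d)) := by
    rw [le_div_iff₀ (by positivity)]; linarith
  refine h5.trans ?_
  calc Real.sqrt 2 * D / (c0 / 2 * (a * d))
      ≤ Real.sqrt 2 * (6 * (|b| + 1) / a ^ 2 * Real.sqrt s * lam) / (c0 / 2 * (a * d)) := by gcongr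
    _ = _ := by field_simp

end
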